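/- Let ℓ > 3 and p be primes with p ≡ 2 (mod 3) and p > 3ℓ². If −p is not a square modulo ℓ, then no non-principal left O-ideal I of reduced norm ℓ admits an element s of its right order O_R(I) with s² = −p. If −p is a square modulo ℓ, then exactly 6 of the ℓ+1 left O-ideals of reduced norm ℓ are non-principal and admit an element s of their right order with s² = −p, and these 6 ideals fall into exactly 2 left ideal classes. -/

import Mathlib

/-!
Reduce modulo `ℓ`. The trace form of `O` is nondegenerate modulo `ℓ`, so `O/ℓO` behaves like a
`2 × 2` matrix ring over `𝔽_ℓ`, and a left ideal `I` of norm `ℓ` is determined by any element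
`x ∈ I` outside `ℓO`: it is `annIdeal x = {m ∈ O : m x̄ ∈ ℓO}` (`eq_annIdeal`, `annIdeal_mem_S3`).

Because `3ℓ² < p`, elements of `O` of norm at most `ℓ²` lie in `ℤ[ε]` (`eq_Eis_of_small`), and
since `ℤ[ε]` is Euclidean, an ideal of norm `ℓ` that meets `ℤ[ε]` in more than `ℓℤ[ε]` is
principal (`principal_of_Eis_mem`). If `s² = -p` with `s` in the right order of a non-principal
`I`, then `ℓ s ∈ I` is an element of `O` of trace `0` and norm `ℓ² p`. The size of `p` forces
`ℓ s ∈ ℤ[ε] j`, and non-principality then gives `s = ζ j` with `ζ` a unit of `ℤ[ε]`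
(`sqrt_eq_unit_mul_j`). As `O/I` has only scalar endomorphisms, `s ≡ c` modulo `I` for an integer
`c`, and `c² ≡ -p` modulo `ℓ` (`exists_scalar`, `scalar_sq`). This settles the case in which `-p`
is not a square.

Let `r² ≡ -p` modulo `ℓ`. Up to replacing `ζ` by `-ζ`, the above shows that `I` is
`annIdeal (ζ j - r)`. Conversely these six ideals are non-principal, distinct, and have `ζ j` in
their right orders (`T3_eq_image`, `T3_ncard`). All left ideals of norm `ℓ` correspond to the points
of the projective line over `𝔽_ℓ`, through their intersections with the right ideal generated by
`j - r` in `O/ℓO` (`S3_ncard`).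

Two of the six ideals are in the same class only through a unit `u` of `ℤ[ε]`
(`unit_of_image`), and multiplication by `u` on the right replaces `ζ` by `ζ ū²`. The squares have
index `2` in the unit group, which gives two classes, represented by `ζ = 1` and `ζ = -1`
(`classes_ncard`).
-/

open Quaternion

/-- The reduced norm of a quaternion: `Nrd x = x * star x` (a scalar). -/
noncomputable def Nrd {c₁ c₂ : ℚ} (x : ℍ[ℚ, c₁, c₂]) : ℚ := (x * star x).re

/-- `x ∈ ℚ` is divisible by the integer `n` within `ℤ`. -/
def IntDvd (n : ℤ) (x : ℚ) : Prop := ∃ z : ℤ, x = (n : ℚ) * (z : ℚ)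

/-- `I` is a left ideal of the (maximal order whose underlying set is) `Os`. -/
def IsLeftIdealOf {c₁ c₂ : ℚ} (Os : Set ℍ[ℚ, c₁, c₂]) (I : AddSubgroup ℍ[ℚ, c₁, c₂]) : Prop :=
  (I : Set ℍ[ℚ, c₁, c₂]) ⊆ Os ∧ ∀ x ∈ Os, ∀ y ∈ I, x * y ∈ I

/-- The left ideal `I` has reduced norm `ℓ` (gcd of reduced norms of elements is `ℓ`). -/
def HasReducedNorm {c₁ c₂ : ℚ} (I : AddSubgroup ℍ[ℚ, c₁, c₂]) (ℓ : ℤ) : Prop :=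
  (∀ α ∈ I, IntDvd ℓ (Nrd α)) ∧ ∀ d : ℤ, (∀ α ∈ I, IntDvd d (Nrd α)) → d ∣ ℓ

/-- The set `ℓO + I·r = {ℓ·x + y·r : x ∈ Os, y ∈ I}`. -/
def shiftSet {c₁ c₂ : ℚ} (ℓ : ℕ) (Os I : Set ℍ[ℚ, c₁, c₂]) (r : ℍ[ℚ, c₁, c₂]) :
    Set ℍ[ℚ, c₁, c₂] :=
  {z | ∃ x ∈ Os, ∃ y ∈ I, z = (ℓ : ℍ[ℚ, c₁, c₂]) * x + y * r}

/-- The quaternion algebra `ℍ[ℚ, −3, −p]`. -/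
abbrev H3 (p : ℕ) : Type := ℍ[ℚ, -3, -(p : ℚ)]

def qi3 (p : ℕ) : H3 p := ⟨0, 1, 0, 0⟩
def qj3 (p : ℕ) : H3 p := ⟨0, 0, 1, 0⟩
def qk3 (p : ℕ) : H3 p := ⟨0, 0, 0, 1⟩

/-- `ε = (1+i)/2`. -/
def eps (p : ℕ) : H3 p := ⟨1/2, 1/2, 0, 0⟩

/-- `ε̄ = (1−i)/2`. -/
def epsBar (p : ℕ) : H3 p := ⟨1/2, -(1/2), 0, 0⟩

/-- The maximal order `O = ℤ·1 + ℤ·ε + ℤ·(i+k)/3 + ℤ·(j+k)/2` of `ℍ[ℚ,−3,−p]`,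
the endomorphism ring of `y² = x³ + 1` over `𝔽_{p²}` (as a set). -/
def O0 (p : ℕ) : Set (H3 p) :=
  {z | ∃ A B C D : ℤ, z = (A : H3 p) + B • eps p +
    C • (⟨0, 1/3, 0, 1/3⟩ : H3 p) + D • (⟨0, 0, 1/2, 1/2⟩ : H3 p)}

/-- Two left ideals are in the same left ideal class: `J = I·μ` for some `μ ≠ 0`. -/
def SameClass {c₁ c₂ : ℚ} (I J : AddSubgroup ℍ[ℚ, c₁, c₂]) : Prop :=
  ∃ μ : ℍ[ℚ, c₁, c₂], μ ≠ 0 ∧ (J : Set ℍ[ℚ, c₁, c₂]) = (· * μ) '' (I : Set ℍ[ℚ, c₁, c₂])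

/-- `I` is a principal left ideal of the order with underlying set `Os`: `I = O·α`. -/
def IsPrincipalIdeal {c₁ c₂ : ℚ} (Os : Set ℍ[ℚ, c₁, c₂]) (I : AddSubgroup ℍ[ℚ, c₁, c₂]) :
    Prop :=
  ∃ α ∈ Os, (I : Set ℍ[ℚ, c₁, c₂]) = (· * α) '' Os

/-- The set of left `O`-ideals of reduced norm `ℓ` for `O = End(E₀)`. -/
def S3 (p ℓ : ℕ) : Set (AddSubgroup (H3 p)) :=
  {I | IsLeftIdealOf (O0 p) I ∧ HasReducedNorm I (ℓ : ℤ)}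


/-- The set of non-principal left `O`-ideals of reduced norm `ℓ` whose right order
`O_R(I) = {s : y·s ∈ I for all y ∈ I}` contains a square root of `−p`. -/
def T3 (p ℓ : ℕ) : Set (AddSubgroup (H3 p)) :=
  {I ∈ S3 p ℓ | ¬ IsPrincipalIdeal (O0 p) I ∧
    ∃ s : H3 p, (∀ y ∈ I, y * s ∈ I) ∧ s * s = -(p : H3 p)}

/-! ### The maximal order and the reduced norm -/

section Order

variable {p ℓ : ℕ}

lemma mem_O0_iff (x : H3 p) : x ∈ O0 p ↔ ∃ A B C D : ℤ,
    x.re = A + B / 2 ∧ x.imI = B / 2 + C / 3 ∧ x.imJ = D / 2 ∧ x.imK = C / 3 + D / 2 := by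
  simp [O0, QuaternionAlgebra.ext_iff, eps, div_eq_mul_inv]

/-- The maximal order `O0 p` as a subring. -/
def OrdO (p : ℕ) (h3 : p % 3 = 2) : Subring (H3 p) where
  carrier := O0 p
  mul_mem' {x y} hx hy := by
    rw [mem_O0_iff] at *
    obtain ⟨A, B, C, D, h1, h2, h4, h5⟩ := hx
    obtain ⟨E, F, G, H, k1, k2, k4, k5⟩ := hy
    obtain ⟨q, hq⟩ : ∃ q : ℤ, (p : ℤ) = 3 * q + 2 := ⟨p / 3, by omega⟩
    have hq' : (p : ℚ) = 3 * q + 2 := by exact_mod_cast hq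
    -- the multiplication table of the basis `1, ε, (i+k)/3, (j+k)/2`, with `p = 3q + 2`
    refine ⟨A*E - B*F - C*F - C*G - 3*D*H*q - 2*D*H - C*G*q - C*H*q - 2*D*G*q - 2*D*G + B*H - D*F,
      A*F + B*F + B*E + D*G*q + 2*D*G - C*H*q - 2*C*H - 2*B*H + 2*D*F - B*G + C*F,
      A*G + 2*B*G + 3*B*H + C*E - C*F + 2*C*H - 2*D*G - 3*D*F,
      A*H - B*H + D*E + 2*D*F - B*G - C*H + C*F + D*G, ?_, ?_, ?_, ?_⟩ <;>
    · simp [h1, h2, h4, h5, k1, k2, k4, k5, hq']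
      ring
  one_mem' := by
    rw [mem_O0_iff]
    exact ⟨1, 0, 0, 0, by simp⟩
  add_mem' {x y} hx hy := by
    rw [mem_O0_iff] at *
    obtain ⟨A, B, C, D, h1, h2, h4, h5⟩ := hx
    obtain ⟨E, F, G, H, k1, k2, k4, k5⟩ := hy
    refine ⟨A + E, B + F, C + G, D + H, ?_, ?_, ?_, ?_⟩ <;>
    · simp [h1, h2, h4, h5, k1, k2, k4, k5]
      ring
  zero_mem' := by
    rw [mem_O0_iff]
    exact ⟨0, 0, 0, 0, by simp⟩
  neg_mem' {x} hx := by
    rw [mem_O0_iff] at *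
    obtain ⟨A, B, C, D, h1, h2, h4, h5⟩ := hx
    refine ⟨-A, -B, -C, -D, ?_, ?_, ?_, ?_⟩ <;>
    · simp [h1, h2, h4, h5]
      ring

variable {h3 : p % 3 = 2}

lemma mem_OrdO {x : H3 p} : x ∈ OrdO p h3 ↔ x ∈ O0 p := Iff.rfl

lemma mem_OrdO_iff (x : H3 p) : x ∈ OrdO p h3 ↔ ∃ A B C D : ℤ,
    x.re = A + B / 2 ∧ x.imI = B / 2 + C / 3 ∧ x.imJ = D / 2 ∧ x.imK = C / 3 + D / 2 :=
  mem_O0_iff x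

/-- `ℤ⟨i, j⟩` is contained in the order. -/
lemma mk_mem (a b c d : ℤ) : (⟨a, b, c, d⟩ : H3 p) ∈ OrdO p h3 := by
  rw [mem_OrdO_iff]
  refine ⟨a - b - c + d, 2 * b - 2 * d + 2 * c, 3 * d - 3 * c, 2 * c, ?_, ?_, ?_, ?_⟩ <;>
  · simp
    try ring

lemma trace_int {x : H3 p} (hx : x ∈ OrdO p h3) :
    ∃ n : ℤ, x + star x = (n : H3 p) ∧ 2 * x.re = n := by
  rw [mem_OrdO_iff] at hx
  obtain ⟨A, B, C, D, h1, h2, h4, h5⟩ := hx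
  obtain ⟨n, hn⟩ : ∃ n : ℤ, 2 * x.re = n := ⟨2 * A + B, by rw [h1]; push_cast; ring⟩
  refine ⟨n, ?_, hn⟩
  ext <;> simp [← hn]
  ring

lemma star_mem_OrdO {x : H3 p} (hx : x ∈ OrdO p h3) : star x ∈ OrdO p h3 := by
  obtain ⟨n, hn, -⟩ := trace_int hx
  rw [← eq_sub_iff_add_eq'] at hn
  rw [hn]
  exact sub_mem (intCast_mem _ n) hx

lemma Nrd_eq (x : H3 p) :
    Nrd x = x.re ^ 2 + 3 * x.imI ^ 2 + p * x.imJ ^ 2 + 3 * p * x.imK ^ 2 := by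
  simp [Nrd]
  ring

lemma Nrd_mul (x y : H3 p) : Nrd (x * y) = Nrd x * Nrd y := by
  simp only [Nrd_eq]
  simp
  ring

lemma Nrd_add (x y : H3 p) : Nrd (x + y) = Nrd x + Nrd y + 2 * (x * star y).re := by
  simp [Nrd]
  ring

lemma Nrd_intCast (n : ℤ) : Nrd (n : H3 p) = n ^ 2 := by
  simp [Nrd_eq]

lemma Nrd_natCast (n : ℕ) : Nrd (n : H3 p) = n ^ 2 := by
  simp [Nrd_eq]

lemma Nrd_star (x : H3 p) : Nrd (star x) = Nrd x := by
  simp [Nrd_eq]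

lemma mul_star_of_Nrd {x : H3 p} {n : ℤ} (h : Nrd x = n) : x * star x = (n : H3 p) := by
  rw [Nrd_eq] at h
  ext <;> simp <;> linarith

lemma star_mul_of_Nrd {x : H3 p} {n : ℤ} (h : Nrd x = n) : star x * x = (n : H3 p) := by
  have := mul_star_of_Nrd ((Nrd_star x).trans h)
  rwa [star_star] at this

/-- The norm form of the order in its basis, as a form over `ℤ`. -/
lemma Nrd_coord {x : H3 p} {A B C D q : ℤ} (hq : (p : ℤ) = 3 * q + 2) (h1 : x.re = A + B / 2)
    (h2 : x.imI = B / 2 + C / 3) (h4 : x.imJ = D / 2) (h5 : x.imK = C / 3 + D / 2) :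
    Nrd x = ((A^2 + A*B + B^2 + B*C + (q+1)*C^2 + p*C*D + p*D^2 : ℤ) : ℚ) := by
  have hq' : (p : ℚ) = 3 * q + 2 := by exact_mod_cast hq
  rw [Nrd_eq, h1, h2, h4, h5]
  push_cast
  rw [hq']
  ring

lemma Nrd_int {x : H3 p} (hx : x ∈ OrdO p h3) : ∃ n : ℤ, Nrd x = n := by
  rw [mem_OrdO_iff] at hx
  obtain ⟨A, B, C, D, h1, h2, h4, h5⟩ := hx
  exact ⟨_, Nrd_coord (q := p / 3) (by omega) h1 h2 h4 h5⟩

lemma Nrd_pos (hp : 0 < p) {x : H3 p} (hx : x ≠ 0) : 0 < Nrd x := by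
  rw [Nrd_eq]
  have hp' : (0 : ℚ) < p := by exact_mod_cast hp
  by_contra! h
  have a := sq_nonneg x.re
  have b := sq_nonneg x.imI
  have c := mul_nonneg hp'.le (sq_nonneg x.imJ)
  have d := mul_nonneg hp'.le (sq_nonneg x.imK)
  have c0 : (p : ℚ) * x.imJ ^ 2 = 0 := by linarith
  have d0 : (p : ℚ) * x.imK ^ 2 = 0 := by linarith
  apply hx
  ext
  · have : x.re ^ 2 = 0 := by linarith
    simpa using this
  · have : x.imI ^ 2 = 0 := by linarith
    simpa using this
  · simpa [hp.ne'] using c0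
  · simpa [hp.ne'] using d0

lemma exists_inverse (hp : 0 < p) {x : H3 p} (hx : x ≠ 0) :
    ∃ y : H3 p, x * y = 1 ∧ y * x = 1 ∧ Nrd x * Nrd y = 1 := by
  have hn := (Nrd_pos hp hx).ne'
  have key : ∀ z : H3 p, z * star z = algebraMap ℚ (H3 p) (Nrd z) := by
    intro z
    have hz := Nrd_eq z
    generalize Nrd z = n at hz
    subst hz
    rw [QuaternionAlgebra.algebraMap_eq]
    ext <;> simp <;> ring
  have h1 : x * ((Nrd x)⁻¹ • star x) = 1 := by
    rw [mul_smul_comm, key, Algebra.algebraMap_eq_smul_one, smul_smul, inv_mul_cancel₀ hn, one_smul]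
  refine ⟨(Nrd x)⁻¹ • star x, h1, ?_, ?_⟩
  · have h2 := key (star x)
    rw [star_star, Nrd_star] at h2
    rw [smul_mul_assoc, h2, Algebra.algebraMap_eq_smul_one, smul_smul, inv_mul_cancel₀ hn, one_smul]
  · rw [← Nrd_mul, h1, Nrd_eq]
    simp

lemma IntDvd_intCast {n m : ℤ} : IntDvd n (m : ℚ) ↔ n ∣ m := by
  constructor
  · rintro ⟨z, hz⟩
    exact ⟨z, by exact_mod_cast hz⟩
  · rintro ⟨z, hz⟩
    exact ⟨z, by exact_mod_cast hz⟩

lemma IntDvd.sub' {n : ℤ} {x y : ℚ} (hx : IntDvd n x) (hy : IntDvd n y) : IntDvd n (x - y) := by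
  obtain ⟨a, rfl⟩ := hx
  obtain ⟨b, rfl⟩ := hy
  exact ⟨a - b, by push_cast; ring⟩

/-- The sublattice `ℓO` of the order. -/
def LO (p ℓ : ℕ) (h3 : p % 3 = 2) : AddSubgroup (H3 p) where
  carrier := {x | ∃ y ∈ OrdO p h3, x = (ℓ : H3 p) * y}
  add_mem' := by
    rintro _ _ ⟨a, ha, rfl⟩ ⟨b, hb, rfl⟩
    exact ⟨a + b, add_mem ha hb, by rw [mul_add]⟩
  zero_mem' := ⟨0, zero_mem _, by simp⟩
  neg_mem' := by
    rintro _ ⟨a, ha, rfl⟩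
    exact ⟨-a, neg_mem ha, by simp⟩

lemma mem_LO {x : H3 p} : x ∈ LO p ℓ h3 ↔ ∃ y ∈ OrdO p h3, x = (ℓ : H3 p) * y := Iff.rfl

lemma LO_mul_left {x y : H3 p} (hx : x ∈ OrdO p h3) (hy : y ∈ LO p ℓ h3) : x * y ∈ LO p ℓ h3 := by
  obtain ⟨z, hz, rfl⟩ := hy
  refine ⟨x * z, mul_mem hx hz, ?_⟩
  rw [← mul_assoc, ← mul_assoc, Nat.cast_comm]

lemma LO_mul_right {x y : H3 p} (hx : x ∈ LO p ℓ h3) (hy : y ∈ OrdO p h3) :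
    x * y ∈ LO p ℓ h3 := by
  obtain ⟨z, hz, rfl⟩ := hx
  exact ⟨z * y, mul_mem hz hy, by rw [mul_assoc]⟩

lemma LO_star {x : H3 p} (hx : x ∈ LO p ℓ h3) : star x ∈ LO p ℓ h3 := by
  obtain ⟨z, hz, rfl⟩ := hx
  exact ⟨star z, star_mem_OrdO hz, by rw [star_mul, star_natCast, Nat.cast_comm]⟩

lemma natCast_mul_mem_LO {x : H3 p} (hx : x ∈ OrdO p h3) : (ℓ : H3 p) * x ∈ LO p ℓ h3 :=
  ⟨x, hx, rfl⟩

lemma intCast_mem_LO {n : ℤ} (hn : (ℓ : ℤ) ∣ n) : (n : H3 p) ∈ LO p ℓ h3 := by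
  obtain ⟨m, rfl⟩ := hn
  exact ⟨m, intCast_mem _ m, by push_cast; rfl⟩

lemma LO_le {x : H3 p} (hx : x ∈ LO p ℓ h3) : x ∈ OrdO p h3 := by
  obtain ⟨z, hz, rfl⟩ := hx
  exact mul_mem (natCast_mem _ ℓ) hz

lemma natCast_mul_cancel (hℓ : ℓ ≠ 0) {x y : H3 p} (h : (ℓ : H3 p) * x = (ℓ : H3 p) * y) :
    x = y := by
  have hl : (ℓ : ℚ) ≠ 0 := by exact_mod_cast hℓ
  simp only [QuaternionAlgebra.ext_iff] at h ⊢
  simpa [hl, hℓ] using h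

/-- An integer prime to `ℓ` acts invertibly modulo any subgroup that contains `ℓ m`. -/
lemma mem_of_int_mul_mem (hℓ : ℓ.Prime) (I : AddSubgroup (H3 p)) {m : H3 p} {t : ℤ}
    (ht : ¬ (ℓ : ℤ) ∣ t) (h1 : (t : H3 p) * m ∈ I) (h2 : (ℓ : H3 p) * m ∈ I) : m ∈ I := by
  have hc : IsCoprime (ℓ : ℤ) t :=
    (Nat.prime_iff_prime_int.mp hℓ).irreducible.coprime_iff_not_dvd.mpr ht
  obtain ⟨a, b, hab⟩ := hc
  have : m = a • ((ℓ : H3 p) * m) + b • ((t : H3 p) * m) := by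
    have h : ((a * ℓ + b * t : ℤ) : H3 p) * m = m := by rw [hab]; simp
    rw [zsmul_eq_mul, zsmul_eq_mul]
    nth_rewrite 1 [← h]
    push_cast
    rw [add_mul, mul_assoc, mul_assoc]
  rw [this]
  exact add_mem (zsmul_mem h2 a) (zsmul_mem h1 b)

end Order

/-! ### Left ideals of norm `ℓ` -/

section Ideals

variable {p ℓ : ℕ} {h3 : p % 3 = 2}

lemma prime_int (hℓ : ℓ.Prime) : Prime (ℓ : ℤ) := Nat.prime_iff_prime_int.mp hℓ

lemma not_dvd_two (hℓ3 : 3 < ℓ) : ¬ (ℓ : ℤ) ∣ 2 := by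
  intro h
  have := Int.le_of_dvd (by norm_num) h
  omega

lemma not_dvd_three (hℓ3 : 3 < ℓ) : ¬ (ℓ : ℤ) ∣ 3 := by
  intro h
  have := Int.le_of_dvd (by norm_num) h
  omega

lemma not_dvd_p (hℓ : ℓ.Prime) (hp : p.Prime) (hlt : ℓ < p) : ¬ (ℓ : ℤ) ∣ p := by
  intro h
  have h' : ℓ ∣ p := by exact_mod_cast h
  rw [Nat.prime_dvd_prime_iff_eq hℓ hp] at h'
  omega

/-- The trace form of `O` is nondegenerate modulo `ℓ`, since its discriminant is a power of `p`. -/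
lemma mem_LO_of_trace (hℓ : ℓ.Prime) (hℓ3 : 3 < ℓ) (hp : p.Prime) (hlt : ℓ < p) {x : H3 p}
    (hx : x ∈ OrdO p h3) (h : ∀ y ∈ OrdO p h3, IntDvd ℓ (2 * (x * star y).re)) :
    x ∈ LO p ℓ h3 := by
  have hP := prime_int hℓ
  have h2 := not_dvd_two hℓ3
  have h3' := not_dvd_three hℓ3
  have hpp := not_dvd_p hℓ hp hlt
  obtain ⟨A, B, C, D, e1, e2, e3, e4⟩ := (mem_OrdO_iff x).1 hx
  have d1 : (ℓ : ℤ) ∣ 2 * A + B := by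
    rw [← IntDvd_intCast]
    convert h _ (mk_mem 1 0 0 0) using 1
    simp [e1]
    ring
  have d2 : (ℓ : ℤ) ∣ 3 * B + 2 * C := by
    rw [← IntDvd_intCast]
    convert h _ (mk_mem 0 1 0 0) using 1
    simp [e2]
    ring
  have d3 : (ℓ : ℤ) ∣ p * D := by
    rw [← IntDvd_intCast]
    convert h _ (mk_mem 0 0 1 0) using 1
    simp [e3]
    ring
  have d4 : (ℓ : ℤ) ∣ p * (2 * C + 3 * D) := by
    rw [← IntDvd_intCast]
    convert h _ (mk_mem 0 0 0 1) using 1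
    simp [e4]
    ring
  have D1 : (ℓ : ℤ) ∣ D := (hP.dvd_or_dvd d3).resolve_left hpp
  have C1 : (ℓ : ℤ) ∣ C :=
    (hP.dvd_or_dvd ((dvd_add_left (D1.mul_left 3)).1
      ((hP.dvd_or_dvd d4).resolve_left hpp))).resolve_left h2
  have B1 : (ℓ : ℤ) ∣ B :=
    (hP.dvd_or_dvd ((dvd_add_left (C1.mul_left 2)).1 d2)).resolve_left h3'
  have A1 : (ℓ : ℤ) ∣ A :=
    (hP.dvd_or_dvd ((dvd_add_left B1).1 d1)).resolve_left h2
  obtain ⟨a, rfl⟩ := A1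
  obtain ⟨b, rfl⟩ := B1
  obtain ⟨c, rfl⟩ := C1
  obtain ⟨d, rfl⟩ := D1
  refine ⟨⟨a + b / 2, b / 2 + c / 3, d / 2, c / 3 + d / 2⟩,
    (mem_OrdO_iff _).2 ⟨a, b, c, d, rfl, rfl, rfl, rfl⟩, ?_⟩
  ext <;> simp [e1, e2, e3, e4] <;> ring

lemma trace_comm (x y : H3 p) : (x * y).re = (y * x).re := by
  simp
  ring

lemma exists_trace_unit (hℓ : ℓ.Prime) (hℓ3 : 3 < ℓ) (hp : p.Prime) (hlt : ℓ < p) {x : H3 p}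
    (hx : x ∈ OrdO p h3) (h : x ∉ LO p ℓ h3) :
    ∃ y ∈ OrdO p h3, ∃ t : ℤ, ¬ (ℓ : ℤ) ∣ t ∧ 2 * (x * star y).re = t ∧
      x * star y + y * star x = (t : H3 p) ∧ star x * y + star y * x = (t : H3 p) := by
  by_contra! hc
  apply h
  apply mem_LO_of_trace hℓ hℓ3 hp hlt hx
  intro y hy
  obtain ⟨t, ht1, ht2⟩ := trace_int (mul_mem hx (star_mem_OrdO hy))
  obtain ⟨t', ht1', ht2'⟩ := trace_int (mul_mem (star_mem_OrdO hx) hy)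
  have htt : t = t' := by
    have : (t : ℚ) = t' := by
      rw [← ht2, ← ht2']
      simp
    exact_mod_cast this
  subst htt
  rw [ht2, IntDvd_intCast]
  by_contra hd
  refine hc y hy t hd ht2 ?_ ?_
  · rw [← ht1, star_mul, star_star]
  · rw [← ht1', star_mul, star_star]

/-- A left `O`-ideal contains the norms of its elements, hence their gcd. -/
lemma natCast_mem_of_S3 {I : AddSubgroup (H3 p)} (h3 : p % 3 = 2) (hI : I ∈ S3 p ℓ) :
    (ℓ : H3 p) ∈ I := by
  obtain ⟨⟨hle, hmul⟩, hN, hg⟩ := hI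
  obtain ⟨d, hd⟩ := Int.subgroup_cyclic (I.comap (Int.castAddHom (H3 p)))
  have hmem : ∀ n : ℤ, (n : H3 p) ∈ I ↔ d ∣ n := by
    intro n
    have : n ∈ I.comap (Int.castAddHom (H3 p)) ↔ n ∈ AddSubgroup.closure {d} := by rw [hd]
    rw [← AddSubgroup.zmultiples_eq_closure, Int.mem_zmultiples_iff] at this
    exact this
  have := hg d (fun α hα => by
    have hα' : α ∈ OrdO p h3 := hle hα
    obtain ⟨n, hn⟩ := Nrd_int hα'
    rw [hn, IntDvd_intCast, ← hmem, ← star_mul_of_Nrd hn]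
    exact hmul _ (star_mem_OrdO hα') _ hα)
  rw [← hmem] at this
  exact_mod_cast this

lemma LO_le_of_S3 {I : AddSubgroup (H3 p)} (hI : I ∈ S3 p ℓ) {x : H3 p} (hx : x ∈ LO p ℓ h3) :
    x ∈ I := by
  obtain ⟨y, hy, rfl⟩ := hx
  rw [Nat.cast_comm]
  exact hI.1.2 y hy _ (natCast_mem_of_S3 h3 hI)

lemma mem_OrdO_of_S3 {I : AddSubgroup (H3 p)} (hI : I ∈ S3 p ℓ) {x : H3 p} (hx : x ∈ I) :
    x ∈ OrdO p h3 := hI.1.1 hx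

lemma exists_not_mem_LO (hℓ : ℓ.Prime) (h3 : p % 3 = 2) {I : AddSubgroup (H3 p)}
    (hI : I ∈ S3 p ℓ) : ∃ x ∈ I, x ∉ LO p ℓ h3 := by
  by_contra! hc
  have := hI.2.2 (ℓ ^ 2) (fun α hα => by
    obtain ⟨y, hy, rfl⟩ := hc α hα
    obtain ⟨n, hn⟩ := Nrd_int hy
    exact ⟨n, by rw [Nrd_mul, Nrd_natCast, hn]; push_cast; ring⟩)
  have h' : ℓ ^ 2 ∣ ℓ := by exact_mod_cast this
  have := Nat.le_of_dvd hℓ.pos h'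
  nlinarith [hℓ.two_le]

/-- `I Ī ⊆ ℓO` for a left `O`-ideal `I` whose norms are all divisible by `ℓ`. -/
lemma mul_star_mem_LO (hℓ : ℓ.Prime) (hℓ3 : 3 < ℓ) (hp : p.Prime) (hlt : ℓ < p)
    {I : AddSubgroup (H3 p)} (hI : I ∈ S3 p ℓ) {x y : H3 p} (hx : x ∈ I) (hy : y ∈ I) :
    x * star y ∈ LO p ℓ h3 := by
  have hxO : x ∈ OrdO p h3 := hI.1.1 hx
  have hyO : y ∈ OrdO p h3 := hI.1.1 hy
  apply mem_LO_of_trace hℓ hℓ3 hp hlt (mul_mem hxO (star_mem_OrdO hyO))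
  intro z hz
  have hzx : star z * x ∈ I := hI.1.2 _ (star_mem_OrdO hz) _ hx
  have hadd := Nrd_add (star z * x) y
  have : 2 * (x * star y * star z).re = Nrd (star z * x + y) - Nrd (star z * x) - Nrd y := by
    rw [hadd, trace_comm _ (star z), mul_assoc]
    ring
  rw [this]
  exact ((hI.2.1 _ (add_mem hzx hy)).sub' (hI.2.1 _ hzx)).sub' (hI.2.1 _ hy)

/-- The left ideal `{m ∈ O : m x̄ ∈ ℓO}`. Modulo `ℓ`, where `O` becomes a matrix ring and
`x` has rank one, it consists of the matrices killing the kernel of `x`. -/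
def annIdeal (p ℓ : ℕ) (h3 : p % 3 = 2) (x : H3 p) : AddSubgroup (H3 p) where
  carrier := {m | m ∈ OrdO p h3 ∧ m * star x ∈ LO p ℓ h3}
  add_mem' := by
    rintro a b ⟨ha, ha'⟩ ⟨hb, hb'⟩
    exact ⟨add_mem ha hb, by rw [add_mul]; exact add_mem ha' hb'⟩
  zero_mem' := ⟨zero_mem _, by rw [zero_mul]; exact zero_mem _⟩
  neg_mem' := by
    rintro a ⟨ha, ha'⟩
    exact ⟨neg_mem ha, by rw [neg_mul]; exact neg_mem ha'⟩

lemma mem_annIdeal {x m : H3 p} :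
    m ∈ annIdeal p ℓ h3 x ↔ m ∈ OrdO p h3 ∧ m * star x ∈ LO p ℓ h3 := Iff.rfl

/-- An ideal of norm `ℓ` is determined by any of its elements outside `ℓO`. -/
lemma eq_annIdeal (hℓ : ℓ.Prime) (hℓ3 : 3 < ℓ) (hp : p.Prime) (hlt : ℓ < p)
    {I : AddSubgroup (H3 p)} (hI : I ∈ S3 p ℓ) {x : H3 p} (hx : x ∈ I) (hx' : x ∉ LO p ℓ h3) :
    I = annIdeal p ℓ h3 x := by
  have hxO : x ∈ OrdO p h3 := hI.1.1 hx
  ext m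
  rw [mem_annIdeal]
  constructor
  · intro hm
    exact ⟨hI.1.1 hm, mul_star_mem_LO hℓ hℓ3 hp hlt hI hm hx⟩
  · rintro ⟨hmO, hm⟩
    obtain ⟨y, hy, t, ht, -, -, hty⟩ := exists_trace_unit hℓ hℓ3 hp hlt hxO hx'
    apply mem_of_int_mul_mem hℓ I ht
    · -- `t m = (m x̄) y + (m ȳ) x`
      have : (t : H3 p) * m = m * star x * y + m * star y * x := by
        rw [Int.cast_comm, ← hty, mul_add, mul_assoc, mul_assoc]
      rw [this]
      exact add_mem (LO_le_of_S3 hI (LO_mul_right hm hy))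
        (hI.1.2 _ (mul_mem hmO (star_mem_OrdO hy)) _ hx)
    · exact LO_le_of_S3 hI (natCast_mul_mem_LO hmO)

/-- Every element of `O` outside `ℓO` whose norm is divisible by `ℓ` lies in an ideal of norm `ℓ`. -/
lemma annIdeal_mem_S3 (hℓ : ℓ.Prime) (hℓ3 : 3 < ℓ) (hp : p.Prime) (hlt : ℓ < p) {x : H3 p}
    (hx : x ∈ OrdO p h3) (hx' : x ∉ LO p ℓ h3) {n : ℤ} (hn : Nrd x = n) (hdvd : (ℓ : ℤ) ∣ n) :
    annIdeal p ℓ h3 x ∈ S3 p ℓ ∧ x ∈ annIdeal p ℓ h3 x := by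
  have hxI : x ∈ annIdeal p ℓ h3 x := ⟨hx, by
    rw [mul_star_of_Nrd hn]
    exact intCast_mem_LO hdvd⟩
  have hlI : ∀ y ∈ OrdO p h3, (ℓ : H3 p) * y ∈ annIdeal p ℓ h3 x := fun y hy =>
    ⟨mul_mem (natCast_mem _ ℓ) hy, by
      rw [mul_assoc]; exact natCast_mul_mem_LO (mul_mem hy (star_mem_OrdO hx))⟩
  refine ⟨⟨⟨fun m hm => hm.1, ?_⟩, ?_, ?_⟩, hxI⟩
  · intro a ha m hm
    have ha' : a ∈ OrdO p h3 := ha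
    exact ⟨mul_mem ha' hm.1, by rw [mul_assoc]; exact LO_mul_left ha' hm.2⟩
  · intro m hm
    obtain ⟨k, hk⟩ := Nrd_int hm.1
    rw [hk, IntDvd_intCast]
    by_contra hd
    apply hx'
    -- an element of norm prime to `ℓ` would force `x̄ ∈ ℓO`
    have : star x ∈ LO p ℓ h3 := by
      apply mem_of_int_mul_mem hℓ _ hd
      · rw [← star_mul_of_Nrd hk, mul_assoc]
        exact LO_mul_left (star_mem_OrdO hm.1) hm.2
      · exact natCast_mul_mem_LO (star_mem_OrdO hx)
    simpa using LO_star this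
  · intro d hd
    obtain ⟨y, hy, t, ht, ht', -, -⟩ := exists_trace_unit hℓ hℓ3 hp hlt hx hx'
    have hly := hlI y hy
    have h1 := hd _ (hlI 1 (one_mem _))
    have h2 : IntDvd d (((ℓ : ℤ) * t : ℤ) : ℚ) := by
      have e := Nrd_add x ((ℓ : H3 p) * y)
      have e' : 2 * (x * star ((ℓ : H3 p) * y)).re = (((ℓ : ℤ) * t : ℤ) : ℚ) := by
        push_cast
        rw [← ht']
        simp
        ring
      rw [e'] at e
      have := ((hd _ (add_mem hxI hly)).sub' (hd _ hxI)).sub' (hd _ hly)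
      rw [e] at this
      convert this using 1
      ring
    rw [mul_one, Nrd_natCast] at h1
    have h1' : d ∣ (ℓ : ℤ) * ℓ := by
      rw [← IntDvd_intCast]
      push_cast
      rwa [← sq]
    rw [IntDvd_intCast] at h2
    have hc : IsCoprime (ℓ : ℤ) t := (prime_int hℓ).irreducible.coprime_iff_not_dvd.mpr ht
    obtain ⟨a, b, hab⟩ := hc
    have : (ℓ : ℤ) = a * (ℓ * ℓ) + b * (ℓ * t) := by linear_combination (-(ℓ : ℤ)) * hab
    rw [this]
    exact dvd_add (h1'.mul_left a) (h2.mul_left b)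

end Ideals

/-! ### Eisenstein integers inside the order -/

section Eisenstein

variable {p ℓ : ℕ} {h3 : p % 3 = 2}

/-- The Eisenstein integer `a + bε`, embedded in the quaternion algebra. -/
def Eis (p : ℕ) (a b : ℤ) : H3 p := ⟨a + b / 2, b / 2, 0, 0⟩

lemma Eis_mem (a b : ℤ) : Eis p a b ∈ OrdO p h3 :=
  (mem_OrdO_iff _).2 ⟨a, b, 0, 0, by simp [Eis]⟩

lemma Nrd_Eis (a b : ℤ) : Nrd (Eis p a b) = ((a ^ 2 + a * b + b ^ 2 : ℤ) : ℚ) := by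
  rw [Nrd_eq]
  simp [Eis]
  ring

lemma Eis_mul (a b c d : ℤ) :
    Eis p a b * Eis p c d = Eis p (a * c - b * d) (a * d + b * c + b * d) := by
  ext <;> simp [Eis] <;> ring

lemma Eis_sub (a b c d : ℤ) : Eis p a b - Eis p c d = Eis p (a - c) (b - d) := by
  ext <;> simp [Eis] <;> ring

lemma Eis_star (a b : ℤ) : star (Eis p a b) = Eis p (a + b) (-b) := by
  ext <;> simp [Eis] <;> ring

lemma Eis_zero_right (a : ℤ) : Eis p a 0 = (a : H3 p) := by
  ext <;> simp [Eis]

lemma Eis_inj {a b c d : ℤ} (h : Eis p a b = Eis p c d) : a = c ∧ b = d := by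
  simp only [Eis, QuaternionAlgebra.ext_iff] at h
  obtain ⟨h1, h2, -, -⟩ := h
  have hb : (b : ℚ) = d := by linarith
  have ha : (a : ℚ) = c := by linarith
  exact ⟨by exact_mod_cast ha, by exact_mod_cast hb⟩

lemma eis_norm_nonneg (a b : ℤ) : 0 ≤ a ^ 2 + a * b + b ^ 2 := by
  nlinarith [sq_nonneg (2 * a + b), sq_nonneg b]

lemma eis_norm_eq_zero {a b : ℤ} (h : a ^ 2 + a * b + b ^ 2 = 0) : a = 0 ∧ b = 0 := by
  have hb : b = 0 := by
    by_contra hb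
    have := sq_pos_of_ne_zero hb
    nlinarith [sq_nonneg (2 * a + b)]
  subst hb
  simpa using h

lemma exists_nearest (M : ℤ) {n : ℤ} (hn : 0 < n) : ∃ q m : ℤ, M = q * n + m ∧ |2 * m| ≤ n := by
  have h1 := Int.emod_add_mul_ediv M n
  have h2 := Int.emod_nonneg M hn.ne'
  have h3 := Int.emod_lt_of_pos M hn
  by_cases h : 2 * (M % n) ≤ n
  · exact ⟨M / n, M % n, by linarith, by rw [abs_le]; constructor <;> linarith⟩
  · exact ⟨M / n + 1, M % n - n, by linarith, by rw [abs_le]; constructor <;> linarith⟩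

/-- Euclidean division in `ℤ[ε]`. -/
lemma eis_div (a b : ℤ) {c d : ℤ} (hn : 0 < c ^ 2 + c * d + d ^ 2) :
    ∃ u v : ℤ, (a - (u * c - v * d)) ^ 2 + (a - (u * c - v * d)) * (b - (u * d + v * c + v * d)) +
      (b - (u * d + v * c + v * d)) ^ 2 < c ^ 2 + c * d + d ^ 2 := by
  set n := c ^ 2 + c * d + d ^ 2 with hn'
  -- round the coordinates of `(a + bε) · conj (c + dε)` to the nearest multiples of the norm `n`
  obtain ⟨u, m, hm, hm'⟩ := exists_nearest (a * (c + d) + b * d) hn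
  obtain ⟨v, k, hk, hk'⟩ := exists_nearest (-a * d + b * c) hn
  refine ⟨u, v, ?_⟩
  set X := (a - (u * c - v * d)) ^ 2 + (a - (u * c - v * d)) * (b - (u * d + v * c + v * d)) +
      (b - (u * d + v * c + v * d)) ^ 2 with hX
  have key : X * n = m ^ 2 + m * k + k ^ 2 := by
    have e1 : m = (a * (c + d) + b * d) - u * n := by linarith
    have e2 : k = (-a * d + b * c) - v * n := by linarith
    rw [e1, e2, hX, hn']
    ring
  have b1 : 4 * m ^ 2 ≤ n ^ 2 := by
    have := sq_le_sq' (by linarith [abs_nonneg (2 * m)]) hm'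
    rw [sq_abs] at this
    linarith
  have b2 : 4 * k ^ 2 ≤ n ^ 2 := by
    have := sq_le_sq' (by linarith [abs_nonneg (2 * k)]) hk'
    rw [sq_abs] at this
    linarith
  have b3 : 2 * (m * k) ≤ m ^ 2 + k ^ 2 := by nlinarith [sq_nonneg (m - k)]
  have : X * n < n * n := by nlinarith
  exact lt_of_mul_lt_mul_right this hn.le

/-- A short element of `O` lies in `ℤ[ε]`. -/
lemma eq_Eis_of_small (hp : 0 < p) {x : H3 p} (hx : x ∈ OrdO p h3) {n : ℤ} (hn : Nrd x = n)
    (hlt : 3 * n < p) : ∃ a b : ℤ, x = Eis p a b := by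
  obtain ⟨A, B, C, D, e1, e2, e3, e4⟩ := (mem_OrdO_iff x).1 hx
  obtain ⟨q, hq⟩ : ∃ q : ℤ, (p : ℤ) = 3 * q + 2 := ⟨p / 3, by omega⟩
  have hN := Nrd_coord hq e1 e2 e3 e4
  rw [hn] at hN
  have hN : n = A^2 + A*B + B^2 + B*C + (q+1)*C^2 + p*C*D + p*D^2 := by exact_mod_cast hN
  have hp' : (0 : ℤ) < p := by exact_mod_cast hp
  have hform : C ^ 2 + 3 * C * D + 3 * D ^ 2 < 1 := by
    by_contra! hc
    have h12 : 12 * n = 3 * (2 * A + B) ^ 2 + (3 * B + 2 * C) ^ 2 +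
        4 * (p * (C ^ 2 + 3 * C * D + 3 * D ^ 2)) := by
      rw [hN]
      linear_combination (-4 * C ^ 2) * hq
    nlinarith [sq_nonneg (2 * A + B), sq_nonneg (3 * B + 2 * C)]
  have hD : D = 0 := by
    by_contra hD
    have := sq_pos_of_ne_zero hD
    nlinarith [sq_nonneg (2 * C + 3 * D)]
  subst hD
  have hC : C = 0 := by
    by_contra hC
    have := sq_pos_of_ne_zero hC
    nlinarith
  subst hC
  refine ⟨A, B, ?_⟩
  ext <;> simp [Eis, e1, e2, e3, e4]

/-- If an ideal of norm `ℓ` meets `ℤ[ε]` in more than `ℓℤ[ε]`, then it is generated by an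
element of `ℤ[ε]` of norm `ℓ`, namely a shortest nonzero one. -/
lemma principal_of_Eis_mem (hℓ : ℓ.Prime) (hℓ3 : 3 < ℓ) (hp : p.Prime) (hlt : ℓ < p)
    (h3 : p % 3 = 2) {I : AddSubgroup (H3 p)} (hI : I ∈ S3 p ℓ) {a b : ℤ} (hab : Eis p a b ∈ I)
    (hnd : ¬ ((ℓ : ℤ) ∣ a ∧ (ℓ : ℤ) ∣ b)) : IsPrincipalIdeal (O0 p) I := by
  classical
  have hlI := natCast_mem_of_S3 h3 hI
  have hlE : (ℓ : H3 p) = Eis p ℓ 0 := by rw [Eis_zero_right]; simp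
  have hex : ∃ n : ℕ, 0 < n ∧ ∃ c d : ℤ, Eis p c d ∈ I ∧ c ^ 2 + c * d + d ^ 2 = n := by
    refine ⟨ℓ ^ 2, by positivity, ℓ, 0, hlE ▸ hlI, by push_cast; ring⟩
  obtain ⟨hn0, c, d, hcd, hn⟩ := Nat.find_spec hex
  have hmin := fun m => Nat.find_min hex (m := m)
  set n := Nat.find hex
  have hn0' : 0 < c ^ 2 + c * d + d ^ 2 := by rw [hn]; exact_mod_cast hn0
  have hdiv : ∀ e f : ℤ, Eis p e f ∈ I → ∃ u v : ℤ, Eis p e f = Eis p u v * Eis p c d := by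
    intro e f hef
    obtain ⟨u, v, huv⟩ := eis_div e f hn0'
    refine ⟨u, v, ?_⟩
    have hmem : Eis p e f - Eis p u v * Eis p c d ∈ I :=
      sub_mem hef (hI.1.2 _ (Eis_mem (h3 := h3) u v) _ hcd)
    rw [Eis_mul, Eis_sub] at hmem
    rw [Eis_mul]
    set e' := e - (u * c - v * d)
    set f' := f - (u * d + v * c + v * d)
    have hnn := eis_norm_nonneg e' f'
    have hz : e' ^ 2 + e' * f' + f' ^ 2 = 0 := by
      by_contra hne
      refine hmin (e' ^ 2 + e' * f' + f' ^ 2).toNat (by omega) ⟨by omega, e', f', hmem, by omega⟩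
    obtain ⟨h1, h2⟩ := eis_norm_eq_zero hz
    congr 1 <;> linarith
  obtain ⟨u, v, huv⟩ := hdiv ℓ 0 (hlE ▸ hlI)
  obtain ⟨u', v', huv'⟩ := hdiv a b hab
  have hNl : (ℓ : ℤ) ^ 2 = (u ^ 2 + u * v + v ^ 2) * n := by
    have := congrArg Nrd huv
    rw [Nrd_mul, Nrd_Eis, Nrd_Eis, Nrd_Eis, hn] at this
    have h : (ℓ : ℤ) ^ 2 + ℓ * 0 + 0 ^ 2 = (u ^ 2 + u * v + v ^ 2) * n := by exact_mod_cast this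
    linarith
  have hln : ℓ ∣ n := by
    have := hI.2.1 _ hcd
    rw [Nrd_Eis, IntDvd_intCast, hn] at this
    exact_mod_cast this
  have hnl : n ∣ ℓ ^ 2 := by
    have : (n : ℤ) ∣ (ℓ : ℤ) ^ 2 := ⟨_, by rw [hNl, mul_comm]⟩
    exact_mod_cast this
  have hnℓ : n = ℓ := by
    obtain ⟨k, hk, hk'⟩ := (Nat.dvd_prime_pow hℓ).1 hnl
    interval_cases k
    · rw [hk', pow_zero] at hln
      have := Nat.le_of_dvd (by norm_num) hln
      omega
    · simpa using hk'
    · exfalso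
      apply hnd
      -- then `u + vε` is a unit, so `c + dε` and with it `a + bε` is divisible by `ℓ`
      have hl2 : (ℓ : ℤ) ^ 2 ≠ 0 := by have := hℓ.pos; positivity
      have hu1 : u ^ 2 + u * v + v ^ 2 = 1 := by
        rw [hk'] at hNl
        push_cast at hNl
        exact mul_right_cancel₀ hl2 (by linarith)
      have hG : Eis p c d = Eis p (u + v) (-v) * (ℓ : H3 p) := by
        rw [hlE, huv, ← mul_assoc, ← Eis_star,
          star_mul_of_Nrd (n := 1) (by rw [Nrd_Eis, hu1])]
        simp
      rw [hG, ← mul_assoc, Eis_mul, hlE, Eis_mul] at huv'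
      obtain ⟨r1, r2⟩ := Eis_inj huv'
      simp only [mul_zero, sub_zero, zero_add, add_zero] at r1 r2
      exact ⟨Dvd.intro_left _ r1.symm, Dvd.intro_left _ r2.symm⟩
  have hNG : Nrd (Eis p c d) = (ℓ : ℤ) := by rw [Nrd_Eis, hn, hnℓ]
  refine ⟨Eis p c d, Eis_mem (h3 := h3) c d, ?_⟩
  ext x
  constructor
  · intro hx
    obtain ⟨y, hy, hy'⟩ := mul_star_mem_LO (h3 := h3) hℓ hℓ3 hp hlt hI hx hcd
    refine ⟨y, hy, ?_⟩
    apply natCast_mul_cancel hℓ.ne_zero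
    dsimp only
    rw [← mul_assoc, ← hy', mul_assoc, star_mul_of_Nrd hNG, Nat.cast_comm]
    simp
  · rintro ⟨y, hy, rfl⟩
    exact hI.1.2 y hy _ hcd

end Eisenstein

/-! ### Square roots of `-p` in right orders -/

section RightOrder

variable {p ℓ : ℕ} {h3 : p % 3 = 2}

lemma qj3_mem : qj3 p ∈ OrdO p h3 := by
  convert mk_mem (p := p) (h3 := h3) 0 0 1 0 using 1
  simp [qj3]

lemma Eis_j_sq {a b : ℤ} (h : a ^ 2 + a * b + b ^ 2 = 1) :
    (Eis p a b * qj3 p) * (Eis p a b * qj3 p) = -(p : H3 p) := by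
  have h' : (a : ℚ) ^ 2 + a * b + b ^ 2 = 1 := by exact_mod_cast h
  ext <;> simp [Eis, qj3]
  · linear_combination (-(p : ℚ)) * h'
  all_goals ring

lemma two_re_of_mem_LO {x : H3 p} (hx : x ∈ LO p ℓ h3) {n : ℤ} (hn : 2 * x.re = n) :
    (ℓ : ℤ) ∣ n := by
  obtain ⟨y, hy, rfl⟩ := hx
  obtain ⟨m, -, hm⟩ := trace_int hy
  refine ⟨m, ?_⟩
  have : (n : ℚ) = ℓ * m := by
    rw [← hn, ← hm]
    simp
    ring
  exact_mod_cast this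

lemma dvd_of_sq_add {r : ℤ} (hℓ : ℓ.Prime) (hp : p.Prime) (hlt : ℓ < p)
    (hr : (ℓ : ℤ) ∣ r ^ 2 + p) : ¬ (ℓ : ℤ) ∣ r := by
  intro h
  exact not_dvd_p hℓ hp hlt ((dvd_add_right (h.pow two_ne_zero)).1 hr)

/-- A square root of `-p` in the right order of a non-principal ideal of norm `ℓ` is `ζ j`
with `ζ` one of the six units of `ℤ[ε]`. -/
lemma sqrt_eq_unit_mul_j (hℓ : ℓ.Prime) (hℓ3 : 3 < ℓ) (hp : p.Prime) (h3 : p % 3 = 2)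
    (hpl : 3 * ℓ ^ 2 < p) (hlt : ℓ < p) {I : AddSubgroup (H3 p)} (hI : I ∈ S3 p ℓ)
    (hnp : ¬ IsPrincipalIdeal (O0 p) I) {s : H3 p} (hs : ∀ y ∈ I, y * s ∈ I)
    (hs2 : s * s = -(p : H3 p)) :
    ∃ a b : ℤ, a ^ 2 + a * b + b ^ 2 = 1 ∧ s = Eis p a b * qj3 p := by
  have hp0 : (0 : ℚ) < p := by exact_mod_cast hp.pos
  have hpz : (0 : ℤ) < p := by exact_mod_cast hp.pos
  have hlq : (ℓ : ℚ) ≠ 0 := by exact_mod_cast hℓ.ne_zero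
  have hlz : (ℓ : ℤ) ≠ 0 := by exact_mod_cast hℓ.ne_zero
  have hre : s.re = 0 ∧ Nrd s = p := by
    rw [Nrd_eq]
    simp only [QuaternionAlgebra.ext_iff] at hs2
    simp at hs2
    obtain ⟨g1, g2, g3, g4⟩ := hs2
    have k2 : s.re * s.imI = 0 := by linarith
    have k3 : s.re * s.imJ = 0 := by linarith
    have k4 : s.re * s.imK = 0 := by linarith
    have h0 : s.re = 0 := by
      by_contra h0
      have z2 := (mul_eq_zero.1 k2).resolve_left h0
      have z3 := (mul_eq_zero.1 k3).resolve_left h0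
      have z4 := (mul_eq_zero.1 k4).resolve_left h0
      rw [z2, z3, z4] at g1
      nlinarith [mul_self_nonneg s.re]
    refine ⟨h0, ?_⟩
    rw [h0] at g1 ⊢
    linarith
  have hlI := natCast_mem_of_S3 h3 hI
  have hxI : (ℓ : H3 p) * s ∈ I := hs _ hlI
  have hxO : (ℓ : H3 p) * s ∈ OrdO p h3 := hI.1.1 hxI
  obtain ⟨A, B, C, D, e1, e2, e3, e4⟩ := (mem_OrdO_iff _).1 hxO
  obtain ⟨q, hq⟩ : ∃ q : ℤ, (p : ℤ) = 3 * q + 2 := ⟨p / 3, by omega⟩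
  have hN := Nrd_coord hq e1 e2 e3 e4
  rw [Nrd_mul, Nrd_natCast, hre.2] at hN
  have hN : (ℓ : ℤ) ^ 2 * p = A^2 + A*B + B^2 + B*C + (q+1)*C^2 + p*C*D + p*D^2 := by
    exact_mod_cast hN
  have hB : B = -2 * A := by
    simp [hre.1] at e1
    have : (B : ℚ) = -2 * A := by linarith
    exact_mod_cast this
  subst hB
  have hmain : (3 * A - C) ^ 2 + p * (C ^ 2 + 3 * C * D + 3 * D ^ 2) = p * (3 * ℓ ^ 2) := by
    linear_combination (-3) * hN + C ^ 2 * hq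
  have hdvd : (p : ℤ) ∣ 3 * A - C := by
    apply (Nat.prime_iff_prime_int.mp hp).dvd_of_dvd_pow (n := 2)
    exact ⟨3 * ℓ ^ 2 - (C ^ 2 + 3 * C * D + 3 * D ^ 2), by linarith⟩
  obtain ⟨U, hU⟩ := hdvd
  have hmain2 : p * U ^ 2 + (C ^ 2 + 3 * C * D + 3 * D ^ 2) = 3 * ℓ ^ 2 := by
    apply mul_left_cancel₀ hpz.ne'
    rw [← hmain, hU]
    ring
  -- the size of `p` leaves no room for an `i`-component
  have hU0 : U = 0 := by
    by_contra hU0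
    have h1 := sq_pos_of_ne_zero hU0
    have h2 : 3 * (ℓ : ℤ) ^ 2 < p := by exact_mod_cast hpl
    nlinarith [sq_nonneg (2 * C + 3 * D), sq_nonneg D]
  subst hU0
  have hC : C = 3 * A := by linarith
  subst hC
  have hx : (ℓ : H3 p) * s = Eis p (-A) (2 * A + D) * qj3 p := by
    ext
    · rw [e1]
      simp [Eis, qj3]
      ring
    · rw [e2]
      simp [Eis, qj3]
      ring
    · rw [e3]
      simp [Eis, qj3]
      ring
    · rw [e4]
      simp [Eis, qj3]
      ring
  have hstar : Eis p (-A + (2 * A + D)) (-(2 * A + D)) ∈ I := by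
    rw [← Eis_star]
    apply mem_of_int_mul_mem hℓ I (not_dvd_p hℓ hp hlt)
    · have : ((p : ℤ) : H3 p) * star (Eis p (-A) (2 * A + D)) =
          -(qj3 p * (Eis p (-A) (2 * A + D) * qj3 p)) := by
        push_cast
        ext <;> simp [Eis, qj3]
      rw [this, ← hx]
      exact neg_mem (hI.1.2 _ (qj3_mem (h3 := h3)) _ hxI)
    · exact LO_le_of_S3 (h3 := h3) hI (natCast_mul_mem_LO (star_mem_OrdO (Eis_mem _ _)))
  have hdiv : (ℓ : ℤ) ∣ -A + (2 * A + D) ∧ (ℓ : ℤ) ∣ -(2 * A + D) := by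
    by_contra hnd
    exact hnp (principal_of_Eis_mem hℓ hℓ3 hp hlt h3 hI hstar hnd)
  obtain ⟨b, hb⟩ := (dvd_neg.1 hdiv.2)
  obtain ⟨a, ha⟩ : (ℓ : ℤ) ∣ -A := (dvd_add_left (dvd_neg.1 hdiv.2)).1 hdiv.1
  refine ⟨a, b, ?_, ?_⟩
  · apply mul_left_cancel₀ (pow_ne_zero 2 hlz)
    have : (ℓ : ℤ) ^ 2 * (a ^ 2 + a * b + b ^ 2) =
      (ℓ * a) ^ 2 + (ℓ * a) * (ℓ * b) + (ℓ * b) ^ 2 := by ring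
    rw [this, ← ha, ← hb]
    apply mul_left_cancel₀ (three_ne_zero (α := ℤ))
    linear_combination hmain2
  · apply natCast_mul_cancel hℓ.ne_zero
    rw [hx, ha, hb, ← mul_assoc]
    congr 1
    ext <;> simp [Eis] <;> ring

/-- The endomorphisms of the simple module `O/I` are the scalars of `𝔽_ℓ`; hence
an element `s ∈ O` of the right order of `I` is congruent to an integer modulo `I`. -/
lemma exists_scalar (hℓ : ℓ.Prime) (hℓ3 : 3 < ℓ) (hp : p.Prime) (h3 : p % 3 = 2) (hlt : ℓ < p)
    {I : AddSubgroup (H3 p)} (hI : I ∈ S3 p ℓ) {s : H3 p} (hsO : s ∈ OrdO p h3)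
    (hs : ∀ y ∈ I, y * s ∈ I) : ∃ c : ℤ, s - c ∈ I := by
  obtain ⟨x, hx, hxL⟩ := exists_not_mem_LO hℓ h3 hI
  have hxO : x ∈ OrdO p h3 := hI.1.1 hx
  obtain ⟨y, hy, t, ht, -, hty, -⟩ := exists_trace_unit hℓ hℓ3 hp hlt hxO hxL
  set q := s * star x with hq
  have hqO : q ∈ OrdO p h3 := mul_mem hsO (star_mem_OrdO hxO)
  have hxq : x * q ∈ LO p ℓ h3 := by
    rw [hq, ← mul_assoc]
    exact mul_star_mem_LO hℓ hℓ3 hp hlt hI (hs x hx) hx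
  have hqx : q * x ∈ LO p ℓ h3 := by
    obtain ⟨n, hn⟩ := Nrd_int hxO
    have := hI.2.1 x hx
    rw [hn, IntDvd_intCast] at this
    rw [hq, mul_assoc, star_mul_of_Nrd hn]
    exact LO_mul_left hsO (intCast_mem_LO this)
  obtain ⟨c, hc, -⟩ := trace_int (mul_mem hqO hy)
  have hI' := eq_annIdeal hℓ hℓ3 hp hlt hI hx hxL
  have hmem : (t : H3 p) * s - c ∈ I := by
    rw [hI', mem_annIdeal]
    refine ⟨sub_mem (mul_mem (intCast_mem _ t) hsO) (intCast_mem _ c), ?_⟩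
    have : ((t : H3 p) * s - c) * star x = q * x * star y - star y * star (x * q) := by
      rw [sub_mul, mul_assoc, ← hq, Int.cast_comm, ← hty, ← hc, star_mul q y, star_mul x q]
      noncomm_ring
    rw [this]
    exact sub_mem (LO_mul_right hqx (star_mem_OrdO hy))
      (LO_mul_left (star_mem_OrdO hy) (LO_star hxq))
  obtain ⟨a, b, hab⟩ : IsCoprime (ℓ : ℤ) t :=
    (prime_int hℓ).irreducible.coprime_iff_not_dvd.mpr ht
  refine ⟨b * c, ?_⟩
  apply mem_of_int_mul_mem hℓ I ht
  · have : (t : H3 p) * (s - ((b * c : ℤ) : H3 p)) = (t : H3 p) * s - c + ((ℓ * (a * c) : ℤ) : H3 p) := by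
      have e : (c : ℤ) = (ℓ * (a * c) : ℤ) + t * (b * c) := by linear_combination (-c) * hab
      have e' : (c : H3 p) = ((ℓ * (a * c) : ℤ) : H3 p) + (t : H3 p) * ((b * c : ℤ) : H3 p) := by
        rw [← Int.cast_mul, ← Int.cast_add, ← e]
      rw [mul_sub, eq_sub_iff_add_eq'.2 e'.symm]
      abel
    rw [this]
    exact add_mem hmem (LO_le_of_S3 (h3 := h3) hI (intCast_mem_LO (Dvd.intro _ rfl)))
  · exact LO_le_of_S3 (h3 := h3) hI (natCast_mul_mem_LO (sub_mem hsO (intCast_mem _ _)))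

lemma scalar_sq (hℓ : ℓ.Prime) (h3 : p % 3 = 2) {I : AddSubgroup (H3 p)} (hI : I ∈ S3 p ℓ)
    {s : H3 p} (hsO : s ∈ OrdO p h3) (hs2 : s * s = -(p : H3 p)) {c : ℤ} (hc : s - c ∈ I) :
    (ℓ : ℤ) ∣ c ^ 2 + p := by
  have h1 : (s + c) * (s - c) ∈ I := hI.1.2 _ (add_mem hsO (intCast_mem _ c)) _ hc
  have h2 : (s + c) * (s - c) = ((-(c ^ 2 + p) : ℤ) : H3 p) := by
    have : (s + c) * (s - c) = s * s - c * c + (c * s - s * c) := by noncomm_ring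
    rw [this, hs2, Int.cast_comm c s, sub_self]
    push_cast
    noncomm_ring
  rw [h2] at h1
  have := hI.2.1 _ h1
  rw [Nrd_intCast] at this
  have : (ℓ : ℤ) ∣ (-(c ^ 2 + p)) ^ 2 := by
    rw [← IntDvd_intCast]
    exact_mod_cast this
  exact dvd_neg.1 ((prime_int hℓ).dvd_of_dvd_pow this)

end RightOrder

/-! ### The six ideals -/

section Six

variable {p ℓ : ℕ} {h3 : p % 3 = 2}

/-- The element `ζ j - r` of the order, where `ζ = a + b ε`. -/
noncomputable def rootElt (p : ℕ) (r a b : ℤ) : H3 p := Eis p a b * qj3 p - (r : H3 p)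

/-- The annihilator ideal of `ζ j - r`, where `z` is the pair of coordinates of `ζ`. For a unit `ζ`
and `ℓ ∣ r² + p` it is the left ideal `O ℓ + O (ζ j - r)`. -/
noncomputable def rootIdeal (p ℓ : ℕ) (h3 : p % 3 = 2) (r : ℤ) (z : ℤ × ℤ) : AddSubgroup (H3 p) :=
  annIdeal p ℓ h3 (rootElt p r z.1 z.2)

/-- The units of `ℤ[ε]`, as pairs of coordinates. -/
def eisUnits : Finset (ℤ × ℤ) := {(1, 0), (-1, 0), (0, 1), (0, -1), (1, -1), (-1, 1)}

lemma mem_eisUnits {z : ℤ × ℤ} : z ∈ eisUnits ↔ z.1 ^ 2 + z.1 * z.2 + z.2 ^ 2 = 1 := by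
  obtain ⟨a, b⟩ := z
  constructor
  · intro h
    simp [eisUnits] at h
    rcases h with ⟨rfl, rfl⟩ | ⟨rfl, rfl⟩ | ⟨rfl, rfl⟩ | ⟨rfl, rfl⟩ | ⟨rfl, rfl⟩ | ⟨rfl, rfl⟩ <;>
      norm_num
  · intro h
    simp only at h
    have a1 : a ≤ 1 := by nlinarith [sq_nonneg (2 * b + a), sq_nonneg (a - 2)]
    have a2 : -1 ≤ a := by nlinarith [sq_nonneg (2 * b + a), sq_nonneg (a + 2)]
    have b1 : b ≤ 1 := by nlinarith [sq_nonneg (2 * a + b), sq_nonneg (b - 2)]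
    have b2 : -1 ≤ b := by nlinarith [sq_nonneg (2 * a + b), sq_nonneg (b + 2)]
    interval_cases a <;> interval_cases b <;> simp_all [eisUnits]

lemma rootElt_mem (r a b : ℤ) : rootElt p r a b ∈ OrdO p h3 :=
  sub_mem (mul_mem (Eis_mem _ _) qj3_mem) (intCast_mem _ _)

lemma Nrd_rootElt (r a b : ℤ) :
    Nrd (rootElt p r a b) = (((a ^ 2 + a * b + b ^ 2) * p + r ^ 2 : ℤ) : ℚ) := by
  rw [Nrd_eq]
  simp [rootElt, Eis, qj3]
  ring

lemma rootElt_not_mem_LO (hℓ : ℓ.Prime) (hℓ3 : 3 < ℓ) {r : ℤ} (hr : ¬ (ℓ : ℤ) ∣ r) (a b : ℤ) :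
    rootElt p r a b ∉ LO p ℓ h3 := by
  intro h
  have := two_re_of_mem_LO h (n := 2 * (-r)) (by simp [rootElt, Eis, qj3])
  rcases (prime_int hℓ).dvd_or_dvd this with h | h
  · exact not_dvd_two hℓ3 h
  · exact hr (dvd_neg.1 h)

lemma rootIdeal_mem_S3 (hℓ : ℓ.Prime) (hℓ3 : 3 < ℓ) (hp : p.Prime) (hlt : ℓ < p) {r : ℤ}
    (hr : (ℓ : ℤ) ∣ r ^ 2 + p) {z : ℤ × ℤ} (hz : z ∈ eisUnits) :
    rootIdeal p ℓ h3 r z ∈ S3 p ℓ ∧ rootElt p r z.1 z.2 ∈ rootIdeal p ℓ h3 r z := by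
  apply annIdeal_mem_S3 hℓ hℓ3 hp hlt (rootElt_mem _ _ _)
    (rootElt_not_mem_LO hℓ hℓ3 (dvd_of_sq_add hℓ hp hlt hr) _ _) (Nrd_rootElt _ _ _)
  rw [mem_eisUnits.1 hz, one_mul, add_comm]
  exact hr

lemma rootIdeal_injOn (hℓ : ℓ.Prime) (hℓ3 : 3 < ℓ) (hp : p.Prime) (hlt : ℓ < p) {r : ℤ}
    (hr : (ℓ : ℤ) ∣ r ^ 2 + p) {z w : ℤ × ℤ} (hz : z ∈ eisUnits) (hw : w ∈ eisUnits)
    (h : rootIdeal p ℓ h3 r z = rootIdeal p ℓ h3 r w) : z = w := by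
  obtain ⟨hS, h1⟩ := rootIdeal_mem_S3 (h3 := h3) hℓ hℓ3 hp hlt hr hz
  obtain ⟨-, h2⟩ := rootIdeal_mem_S3 (h3 := h3) hℓ hℓ3 hp hlt hr hw
  rw [← h] at h2
  have h4 := hS.2.1 _ (sub_mem h1 h2)
  set a := z.1 - w.1 with ha
  set b := z.2 - w.2 with hb
  have h5 : Nrd (rootElt p r z.1 z.2 - rootElt p r w.1 w.2) =
      (((a ^ 2 + a * b + b ^ 2) * p : ℤ) : ℚ) := by
    rw [Nrd_eq, ha, hb]
    simp [rootElt, Eis, qj3]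
    ring
  rw [h5, IntDvd_intCast] at h4
  have h6 := ((prime_int hℓ).dvd_or_dvd h4).resolve_right (not_dvd_p hℓ hp hlt)
  -- by the parallelogram law the difference of two units has norm at most `4`
  have h7 : a ^ 2 + a * b + b ^ 2 ≤ 4 := by
    have e1 := mem_eisUnits.1 hz
    have e2 := mem_eisUnits.1 hw
    have e3 := eis_norm_nonneg (z.1 + w.1) (z.2 + w.2)
    rw [ha, hb]
    linarith
  have h8 : a ^ 2 + a * b + b ^ 2 = 0 := by
    by_contra h0
    have := Int.le_of_dvd (lt_of_le_of_ne (eis_norm_nonneg a b) (Ne.symm h0)) h6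
    have h4' : ℓ ≠ 4 := by
      rintro rfl
      norm_num at hℓ
    omega
  obtain ⟨h9, h10⟩ := eis_norm_eq_zero h8
  ext <;> omega

lemma Nrd_eq_of_principal (hp : p.Prime) (h3 : p % 3 = 2)
    {I : AddSubgroup (H3 p)} (hI : I ∈ S3 p ℓ) {α : H3 p} (hα : α ∈ O0 p)
    (h : (I : Set (H3 p)) = (· * α) '' O0 p) : Nrd α = ((ℓ : ℤ) : ℚ) := by
  obtain ⟨n, hn⟩ := Nrd_int (h3 := h3) hα
  have hαI : α ∈ I := by
    have : α ∈ (I : Set (H3 p)) := by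
      rw [h]
      exact ⟨1, one_mem (OrdO p h3), one_mul α⟩
    exact this
  have h1 := hI.2.1 α hαI
  rw [hn, IntDvd_intCast] at h1
  have h2 : n ∣ (ℓ : ℤ) := by
    apply hI.2.2
    intro β hβ
    have : β ∈ (I : Set (H3 p)) := hβ
    rw [h] at this
    obtain ⟨y, hy, rfl⟩ := this
    obtain ⟨m, hm⟩ := Nrd_int (h3 := h3) hy
    exact ⟨m, by simp only [Nrd_mul, hm, hn]; ring⟩
  have h0 : 0 ≤ n := by
    have : (0 : ℚ) ≤ n := by
      rw [← hn]
      by_cases h0 : α = 0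
      · simp [h0, Nrd]
      · exact (Nrd_pos hp.pos h0).le
    exact_mod_cast this
  rw [hn, Int.dvd_antisymm h0 (Int.natCast_nonneg ℓ) h2 h1]

/-- A generator would have norm `ℓ`, hence lie in `ℤ[ε]`; pairing it with `ζ j - r` shows that it
is divisible by `ℓ`. -/
lemma rootIdeal_not_principal (hℓ : ℓ.Prime) (hℓ3 : 3 < ℓ) (hp : p.Prime) (hpl : 3 * ℓ < p)
    (hlt : ℓ < p) {r : ℤ} (hr : (ℓ : ℤ) ∣ r ^ 2 + p) {z : ℤ × ℤ} (hz : z ∈ eisUnits) :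
    ¬ IsPrincipalIdeal (O0 p) (rootIdeal p ℓ h3 r z) := by
  rintro ⟨α, hα, h⟩
  have hP := prime_int hℓ
  obtain ⟨hS, hx⟩ := rootIdeal_mem_S3 (h3 := h3) hℓ hℓ3 hp hlt hr hz
  have hn := Nrd_eq_of_principal hp h3 hS hα h
  obtain ⟨a, b, rfl⟩ := eq_Eis_of_small (h3 := h3) hp.pos hα hn (by exact_mod_cast hpl)
  have hαI : Eis p a b ∈ rootIdeal p ℓ h3 r z := by
    have : Eis p a b ∈ (rootIdeal p ℓ h3 r z : Set (H3 p)) := by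
      rw [h]
      exact ⟨1, one_mem (OrdO p h3), one_mul _⟩
    exact this
  have h1 := two_re_of_mem_LO (mul_star_mem_LO (h3 := h3) hℓ hℓ3 hp hlt hS hx hαI)
    (n := -r * (2 * a + b)) (by simp [rootElt, Eis, qj3]; ring)
  have h2 : (ℓ : ℤ) ∣ 2 * a + b := (hP.dvd_or_dvd h1).resolve_left
    (fun h => dvd_of_sq_add hℓ hp hlt hr (dvd_neg.1 h))
  have hab : a ^ 2 + a * b + b ^ 2 = ℓ := by
    rw [Nrd_Eis] at hn
    exact_mod_cast hn
  have h4 : (ℓ : ℤ) ∣ b := by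
    have : (ℓ : ℤ) ∣ 3 * b ^ 2 := by
      have e : 3 * b ^ 2 = ℓ * 4 - (2 * a + b) * (2 * a + b) := by rw [← hab]; ring
      rw [e]
      exact dvd_sub (Dvd.intro _ rfl) (Dvd.dvd.mul_right h2 _)
    exact hP.dvd_of_dvd_pow ((hP.dvd_or_dvd this).resolve_left (not_dvd_three hℓ3))
  have h5 : (ℓ : ℤ) ∣ a := (hP.dvd_or_dvd ((dvd_add_left h4).1 h2)).resolve_left (not_dvd_two hℓ3)
  obtain ⟨c, rfl⟩ := h4
  obtain ⟨d, rfl⟩ := h5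
  have h6 : (ℓ : ℤ) * (d ^ 2 + d * c + c ^ 2) = 1 := by
    apply mul_left_cancel₀ hP.ne_zero
    linear_combination hab
  exact hP.not_isUnit (IsUnit.of_mul_eq_one _ h6)

lemma rootIdeal_mem_T3 (hℓ : ℓ.Prime) (hℓ3 : 3 < ℓ) (hp : p.Prime) (hpl : 3 * ℓ < p)
    (hlt : ℓ < p) {r : ℤ} (hr : (ℓ : ℤ) ∣ r ^ 2 + p) {z : ℤ × ℤ} (hz : z ∈ eisUnits) :
    rootIdeal p ℓ h3 r z ∈ T3 p ℓ := by
  refine ⟨(rootIdeal_mem_S3 hℓ hℓ3 hp hlt hr hz).1,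
    rootIdeal_not_principal hℓ hℓ3 hp hpl hlt hr hz, Eis p z.1 z.2 * qj3 p, ?_,
    Eis_j_sq (mem_eisUnits.1 hz)⟩
  rintro y ⟨hy, hy'⟩
  have hsO : Eis p z.1 z.2 * qj3 p ∈ OrdO p h3 := mul_mem (Eis_mem _ _) qj3_mem
  refine ⟨mul_mem hy hsO, ?_⟩
  -- `s` commutes with the conjugate of `s - r`
  have : Eis p z.1 z.2 * qj3 p * star (rootElt p r z.1 z.2) =
      star (rootElt p r z.1 z.2) * (Eis p z.1 z.2 * qj3 p) := by
    ext <;> simp [rootElt, Eis, qj3] <;> ring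
  rw [mul_assoc, this, ← mul_assoc]
  exact LO_mul_right hy' hsO

/-- A square root of `-p` in the right order of a non-principal ideal yields a square root `c` of
`-p` modulo `ℓ`. -/
lemma sqrt_scalar (hℓ : ℓ.Prime) (hℓ3 : 3 < ℓ) (hp : p.Prime) (h3 : p % 3 = 2)
    (hpl : 3 * ℓ ^ 2 < p) (hlt : ℓ < p) {I : AddSubgroup (H3 p)} (hI : I ∈ S3 p ℓ)
    (hnp : ¬ IsPrincipalIdeal (O0 p) I) {s : H3 p} (hs : ∀ y ∈ I, y * s ∈ I)
    (hs2 : s * s = -(p : H3 p)) :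
    ∃ a b c : ℤ, a ^ 2 + a * b + b ^ 2 = 1 ∧ (ℓ : ℤ) ∣ c ^ 2 + p ∧ rootElt p c a b ∈ I := by
  obtain ⟨a, b, hab, rfl⟩ := sqrt_eq_unit_mul_j hℓ hℓ3 hp h3 hpl hlt hI hnp hs hs2
  have hsO : Eis p a b * qj3 p ∈ OrdO p h3 := mul_mem (Eis_mem _ _) qj3_mem
  obtain ⟨c, hc⟩ := exists_scalar hℓ hℓ3 hp h3 hlt hI hsO hs
  exact ⟨a, b, c, hab, scalar_sq hℓ h3 hI hsO hs2 hc, hc⟩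

lemma eq_rootIdeal_of_mem (hℓ : ℓ.Prime) (hℓ3 : 3 < ℓ) (hp : p.Prime) (hlt : ℓ < p) {r : ℤ}
    (hr : (ℓ : ℤ) ∣ r ^ 2 + p) {I : AddSubgroup (H3 p)} (hI : I ∈ S3 p ℓ) {z : ℤ × ℤ}
    (h : rootElt p r z.1 z.2 ∈ I) : I = rootIdeal p ℓ h3 r z :=
  eq_annIdeal hℓ hℓ3 hp hlt hI h
    (rootElt_not_mem_LO hℓ hℓ3 (dvd_of_sq_add hℓ hp hlt hr) _ _)

/-- Since `ζ j ≡ -r` modulo `I` means `(-ζ) j ≡ r`, a single root `r` of `-p` modulo `ℓ` accounts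
for all of `T3`. -/
lemma T3_eq_image (hℓ : ℓ.Prime) (hℓ3 : 3 < ℓ) (hp : p.Prime) (h3 : p % 3 = 2)
    (hpl : 3 * ℓ ^ 2 < p) (hpl' : 3 * ℓ < p) (hlt : ℓ < p) {r : ℤ} (hr : (ℓ : ℤ) ∣ r ^ 2 + p) :
    T3 p ℓ = rootIdeal p ℓ h3 r '' (eisUnits : Set (ℤ × ℤ)) := by
  ext I
  constructor
  · rintro ⟨hI, hnp, s, hs, hs2⟩
    obtain ⟨a, b, c, hab, hc, hx⟩ := sqrt_scalar hℓ hℓ3 hp h3 hpl hlt hI hnp hs hs2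
    have hmul : (ℓ : ℤ) ∣ (c - r) * (c + r) := by
      have e : (c - r) * (c + r) = (c ^ 2 + p) - (r ^ 2 + p) := by ring
      rw [e]
      exact dvd_sub hc hr
    rcases (prime_int hℓ).dvd_or_dvd hmul with h | h
    · refine ⟨(a, b), by simpa using mem_eisUnits.2 hab, ?_⟩
      refine (eq_rootIdeal_of_mem hℓ hℓ3 hp hlt hr hI ?_).symm
      have : rootElt p r a b = rootElt p c a b + ((c - r : ℤ) : H3 p) := by
        simp only [rootElt]
        push_cast
        abel
      simp only
      rw [this]
      exact add_mem hx (LO_le_of_S3 (h3 := h3) hI (intCast_mem_LO h))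
    · refine ⟨(-a, -b), mem_eisUnits.2 (by simp only; linarith), ?_⟩
      refine (eq_rootIdeal_of_mem hℓ hℓ3 hp hlt hr hI ?_).symm
      have : rootElt p r (-a) (-b) = -rootElt p c a b - ((c + r : ℤ) : H3 p) := by
        ext <;> simp [rootElt, Eis, qj3] <;> ring
      simp only
      rw [this]
      exact sub_mem (neg_mem hx) (LO_le_of_S3 (h3 := h3) hI (intCast_mem_LO h))
  · rintro ⟨z, hz, rfl⟩
    exact rootIdeal_mem_T3 hℓ hℓ3 hp hpl' hlt hr hz

lemma T3_ncard (hℓ : ℓ.Prime) (hℓ3 : 3 < ℓ) (hp : p.Prime) (h3 : p % 3 = 2)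
    (hpl : 3 * ℓ ^ 2 < p) (hpl' : 3 * ℓ < p) (hlt : ℓ < p) {r : ℤ} (hr : (ℓ : ℤ) ∣ r ^ 2 + p) :
    (T3 p ℓ).ncard = 6 := by
  rw [T3_eq_image hℓ hℓ3 hp h3 hpl hpl' hlt hr, Set.InjOn.ncard_image, Set.ncard_coe_finset]
  · rfl
  · intro z hz w hw h
    exact rootIdeal_injOn hℓ hℓ3 hp hlt hr hz hw h

end Six

/-! ### Counting the left ideals of norm `ℓ` -/

section Count

variable {p ℓ : ℕ} {h3 : p % 3 = 2}

lemma not_dvd_six (hℓ : ℓ.Prime) (hℓ3 : 3 < ℓ) : ¬ (ℓ : ℤ) ∣ 6 := by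
  intro h
  rw [show (6 : ℤ) = 2 * 3 by norm_num] at h
  rcases (prime_int hℓ).dvd_or_dvd h with h | h
  · exact not_dvd_two hℓ3 h
  · exact not_dvd_three hℓ3 h

lemma mk_mem_LO (hℓ : ℓ.Prime) (hℓ3 : 3 < ℓ) {a b c d : ℤ} :
    (⟨a, b, c, d⟩ : H3 p) ∈ LO p ℓ h3 ↔
      (ℓ : ℤ) ∣ a ∧ (ℓ : ℤ) ∣ b ∧ (ℓ : ℤ) ∣ c ∧ (ℓ : ℤ) ∣ d := by
  constructor
  · rintro ⟨y, hy, h⟩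
    obtain ⟨A, B, C, D, h1, h2, h4, h5⟩ := (mem_OrdO_iff y).1 hy
    simp only [QuaternionAlgebra.ext_iff] at h
    simp [h1, h2, h4, h5] at h
    obtain ⟨e1, e2, e3, e4⟩ := h
    have key : ∀ n m : ℤ, 6 * n = ℓ * m → (ℓ : ℤ) ∣ n := fun n m h =>
      ((prime_int hℓ).dvd_or_dvd (Dvd.intro _ h.symm)).resolve_left (not_dvd_six hℓ hℓ3)
    refine ⟨key a (6 * A + 3 * B) ?_, key b (3 * B + 2 * C) ?_, key c (3 * D) ?_,
      key d (2 * C + 3 * D) ?_⟩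
    all_goals
      qify
      first
      | linear_combination 6 * e1
      | linear_combination 6 * e2
      | linear_combination 6 * e3
      | linear_combination 6 * e4
  · rintro ⟨⟨a', rfl⟩, ⟨b', rfl⟩, ⟨c', rfl⟩, ⟨d', rfl⟩⟩
    refine ⟨⟨a', b', c', d'⟩, mk_mem _ _ _ _, ?_⟩
    ext <;> simp

/-- The element `(j - r) (α + β i)`. If `ℓ ∣ r² + p`, these elements make up the right ideal
generated by `j - r` in `O/ℓO ≅ M₂(𝔽_ℓ)`, a plane that meets every left ideal of norm `ℓ` in a
line. -/
def lineElt (p : ℕ) (r α β : ℤ) : H3 p :=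
  ⟨(-r * α : ℤ), (-r * β : ℤ), (α : ℤ), (-β : ℤ)⟩

lemma lineElt_not_mem_LO (hℓ : ℓ.Prime) (hℓ3 : 3 < ℓ) {r α β : ℤ}
    (h : ¬ ((ℓ : ℤ) ∣ α ∧ (ℓ : ℤ) ∣ β)) : lineElt p r α β ∉ LO p ℓ h3 := by
  intro h'
  obtain ⟨-, -, h1, h2⟩ := (mk_mem_LO hℓ hℓ3).1 h'
  exact h ⟨h1, dvd_neg.1 h2⟩

lemma lineIdeal_mem_S3 (hℓ : ℓ.Prime) (hℓ3 : 3 < ℓ) (hp : p.Prime) (hlt : ℓ < p) {r α β : ℤ}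
    (hr : (ℓ : ℤ) ∣ r ^ 2 + p) (h : ¬ ((ℓ : ℤ) ∣ α ∧ (ℓ : ℤ) ∣ β)) :
    annIdeal p ℓ h3 (lineElt p r α β) ∈ S3 p ℓ ∧
      lineElt p r α β ∈ annIdeal p ℓ h3 (lineElt p r α β) := by
  refine annIdeal_mem_S3 hℓ hℓ3 hp hlt (mk_mem _ _ _ _) (lineElt_not_mem_LO hℓ hℓ3 h)
    (n := (r ^ 2 + p) * (α ^ 2 + 3 * β ^ 2)) ?_ (Dvd.dvd.mul_right hr _)
  rw [Nrd_eq]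
  simp [lineElt]
  ring

/-- A left ideal of norm `ℓ` contains at most a line of elements `(j - r) (α + β i)` modulo `ℓ`:
independent ones would produce the element `-2 r D i`, with `D` the determinant of the coordinates. -/
lemma dvd_det_of_mem (hℓ : ℓ.Prime) (hℓ3 : 3 < ℓ) (hp : p.Prime) (hlt : ℓ < p) (h3 : p % 3 = 2)
    {r α β γ δ : ℤ} (hr : (ℓ : ℤ) ∣ r ^ 2 + p) {I : AddSubgroup (H3 p)} (hI : I ∈ S3 p ℓ)
    (h1 : lineElt p r α β ∈ I) (h2 : lineElt p r γ δ ∈ I) : (ℓ : ℤ) ∣ α * δ - β * γ := by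
  have hP := prime_int hℓ
  have hi : (⟨(0 : ℤ), (1 : ℤ), (0 : ℤ), (0 : ℤ)⟩ : H3 p) ∈ OrdO p h3 := mk_mem _ _ _ _
  have h4 := hI.2.1 _ (add_mem (hI.1.2 _ hi _ (sub_mem (zsmul_mem h1 δ) (zsmul_mem h2 β)))
    (sub_mem (zsmul_mem h2 α) (zsmul_mem h1 γ)))
  have h5 : Nrd ((⟨(0 : ℤ), (1 : ℤ), (0 : ℤ), (0 : ℤ)⟩ : H3 p) *
      (δ • lineElt p r α β - β • lineElt p r γ δ) +
      (α • lineElt p r γ δ - γ • lineElt p r α β)) =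
      ((6 * (2 * (r ^ 2 * (α * δ - β * γ) ^ 2)) : ℤ) : ℚ) := by
    rw [Nrd_eq]
    simp [lineElt]
    ring
  rw [h5, IntDvd_intCast] at h4
  have h6 := (hP.dvd_or_dvd h4).resolve_left (not_dvd_six hℓ hℓ3)
  have h7 := (hP.dvd_or_dvd h6).resolve_left (not_dvd_two hℓ3)
  exact hP.dvd_of_dvd_pow ((hP.dvd_or_dvd h7).resolve_left
    (fun h => dvd_of_sq_add hℓ hp hlt hr (hP.dvd_of_dvd_pow h)))

/-- For `x ∈ I` outside `ℓO`, at least one of `(j - r) · 6x` and `(j - r) i · 6x` is nonzero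
modulo `ℓ`, and both lie in `I`. -/
lemma exists_lineElt_mem (hℓ : ℓ.Prime) (hℓ3 : 3 < ℓ) (hp : p.Prime) (hlt : ℓ < p)
    (h3 : p % 3 = 2) {r : ℤ} (hr : (ℓ : ℤ) ∣ r ^ 2 + p) {I : AddSubgroup (H3 p)}
    (hI : I ∈ S3 p ℓ) : ∃ α β : ℤ, lineElt p r α β ∈ I ∧ ¬ ((ℓ : ℤ) ∣ α ∧ (ℓ : ℤ) ∣ β) := by
  have hP := prime_int hℓ
  obtain ⟨x, hx, hxL⟩ := exists_not_mem_LO hℓ h3 hI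
  obtain ⟨A, B, C, D, e1, e2, e3, e4⟩ := (mem_OrdO_iff (h3 := h3) x).1 (hI.1.1 hx)
  obtain ⟨t, ht⟩ : ∃ t : ℤ, t = 6 * A + 3 * B := ⟨_, rfl⟩
  obtain ⟨u, hu⟩ : ∃ u : ℤ, u = 3 * B + 2 * C := ⟨_, rfl⟩
  obtain ⟨v, hv⟩ : ∃ v : ℤ, v = 3 * D := ⟨_, rfl⟩
  obtain ⟨w, hw⟩ : ∃ w : ℤ, w = 2 * C + 3 * D := ⟨_, rfl⟩
  have h6 : ((6 : ℤ) : H3 p) * x = ⟨t, u, v, w⟩ := by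
    have hmul : ∀ s : ℤ, (s : H3 p) * x = ⟨s * x.re, s * x.imI, s * x.imJ, s * x.imK⟩ := by
      intro s
      ext <;> simp
    rw [hmul]
    ext
    · simp [ht, e1]
      ring
    · simp [hu, e2]
      ring
    · simp [hv, e3]
      ring
    · simp [hw, e4]
      ring
  have h6I : (⟨t, u, v, w⟩ : H3 p) ∈ I := by
    rw [← h6]
    exact hI.1.2 _ (intCast_mem (OrdO p h3) 6) _ hx
  have hm1 : lineElt p r (t - r * v) (u + r * w) ∈ I := by
    have h1 : (⟨(-r : ℤ), (0 : ℤ), (1 : ℤ), (0 : ℤ)⟩ : H3 p) * ⟨t, u, v, w⟩ ∈ I :=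
      hI.1.2 _ (mk_mem (h3 := h3) _ _ _ _) _ h6I
    have h2 : (⟨(-(r ^ 2 + p) * v : ℤ), ((r ^ 2 + p) * w : ℤ), (0 : ℤ), (0 : ℤ)⟩ : H3 p) ∈ I :=
      LO_le_of_S3 (h3 := h3) hI ((mk_mem_LO hℓ hℓ3).2 ⟨Dvd.dvd.mul_right (dvd_neg.2 hr) _,
        Dvd.dvd.mul_right hr _, dvd_zero _, dvd_zero _⟩)
    convert sub_mem h1 h2 using 1
    ext <;> simp [lineElt] <;> ring
  have hm2 : lineElt p r (-3 * (u - r * w)) (t + r * v) ∈ I := by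
    have h1 : (⟨(0 : ℤ), (-r : ℤ), (0 : ℤ), (-1 : ℤ)⟩ : H3 p) * ⟨t, u, v, w⟩ ∈ I :=
      hI.1.2 _ (mk_mem (h3 := h3) _ _ _ _) _ h6I
    have h2 : (⟨(3 * ((r ^ 2 + p) * w) : ℤ), ((r ^ 2 + p) * v : ℤ), (0 : ℤ), (0 : ℤ)⟩ : H3 p) ∈ I :=
      LO_le_of_S3 (h3 := h3) hI ((mk_mem_LO hℓ hℓ3).2
        ⟨Dvd.dvd.mul_left (Dvd.dvd.mul_right hr _) _,
        Dvd.dvd.mul_right hr _, dvd_zero _, dvd_zero _⟩)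
    convert sub_mem h1 h2 using 1
    ext <;> simp [lineElt] <;> ring
  by_contra! hc
  obtain ⟨d1, d2⟩ := hc _ _ hm1
  obtain ⟨d3, d4⟩ := hc _ _ hm2
  have d3 := (hP.dvd_or_dvd d3).resolve_left (fun h => not_dvd_three hℓ3 (dvd_neg.1 h))
  have key2 : ∀ n : ℤ, (ℓ : ℤ) ∣ 2 * n → (ℓ : ℤ) ∣ n := fun n h =>
    (hP.dvd_or_dvd h).resolve_left (not_dvd_two hℓ3)
  have keyr : ∀ n : ℤ, (ℓ : ℤ) ∣ r * n → (ℓ : ℤ) ∣ n := fun n h =>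
    (hP.dvd_or_dvd h).resolve_left (dvd_of_sq_add hℓ hp hlt hr)
  have dt : (ℓ : ℤ) ∣ t := key2 t (by rw [show 2 * t = t - r * v + (t + r * v) by ring]; exact dvd_add d1 d4)
  have du : (ℓ : ℤ) ∣ u := key2 u (by rw [show 2 * u = u + r * w + (u - r * w) by ring]; exact dvd_add d2 d3)
  have dv : (ℓ : ℤ) ∣ v := keyr v ((dvd_add_right dt).1 d4)
  have dw : (ℓ : ℤ) ∣ w := keyr w ((dvd_add_right du).1 d2)
  apply hxL
  apply mem_of_int_mul_mem hℓ _ (not_dvd_six hℓ hℓ3)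
  · rw [h6]
    exact (mk_mem_LO hℓ hℓ3).2 ⟨dt, du, dv, dw⟩
  · exact natCast_mul_mem_LO (hI.1.1 hx)

/-- The parametrisation of the left ideals of norm `ℓ` by the projective line over `𝔽_ℓ`. -/
def lineIdeal (p ℓ : ℕ) (h3 : p % 3 = 2) (r : ℤ) : Option (Fin ℓ) → AddSubgroup (H3 p)
  | none => annIdeal p ℓ h3 (lineElt p r 0 1)
  | some a => annIdeal p ℓ h3 (lineElt p r 1 (a : ℕ))

lemma S3_ncard (hℓ : ℓ.Prime) (hℓ3 : 3 < ℓ) (hp : p.Prime) (hlt : ℓ < p)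
    (h3 : p % 3 = 2) {r : ℤ} (hr : (ℓ : ℤ) ∣ r ^ 2 + p) : (S3 p ℓ).ncard = ℓ + 1 := by
  have hP := prime_int hℓ
  have h1 : ¬ (ℓ : ℤ) ∣ 1 := fun h => hP.not_isUnit (isUnit_of_dvd_one h)
  have hnone : ¬ ((ℓ : ℤ) ∣ 0 ∧ (ℓ : ℤ) ∣ 1) := fun h => h1 h.2
  have hsome : ∀ b : ℤ, ¬ ((ℓ : ℤ) ∣ 1 ∧ (ℓ : ℤ) ∣ b) := fun b h => h1 h.1
  have hrange : S3 p ℓ = lineIdeal p ℓ h3 r '' Set.univ := by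
    ext I
    constructor
    · intro hI
      obtain ⟨α, β, hm, hnd⟩ := exists_lineElt_mem hℓ hℓ3 hp hlt h3 hr hI
      have hLO : ∀ γ δ : ℤ, (ℓ : H3 p) * lineElt p r γ δ ∈ I := fun γ δ =>
        LO_le_of_S3 (h3 := h3) hI (natCast_mul_mem_LO (mk_mem _ _ _ _))
      by_cases hα : (ℓ : ℤ) ∣ α
      · refine ⟨none, trivial, (eq_annIdeal hℓ hℓ3 hp hlt hI ?_
          (lineElt_not_mem_LO hℓ hℓ3 hnone)).symm⟩
        apply mem_of_int_mul_mem hℓ I (t := β) (fun h => hnd ⟨hα, h⟩) _ (hLO _ _)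
        obtain ⟨k, rfl⟩ := hα
        convert sub_mem hm (zsmul_mem (hLO 1 0) k) using 1
        ext <;> simp [lineElt] <;> ring
      · obtain ⟨k, m, hkm⟩ : IsCoprime (ℓ : ℤ) α :=
          hP.irreducible.coprime_iff_not_dvd.mpr hα
        have hl0 : (0 : ℤ) < ℓ := by exact_mod_cast hℓ.pos
        have hnn := Int.emod_nonneg (m * β) hl0.ne'
        have hlt' := Int.emod_lt_of_pos (m * β) hl0
        have hdiv := Int.emod_add_mul_ediv (m * β) ℓ
        refine ⟨some ⟨(m * β % ℓ).toNat, by omega⟩, trivial, (eq_annIdeal hℓ hℓ3 hp hlt hI ?_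
          (lineElt_not_mem_LO hℓ hℓ3 (hsome _))).symm⟩
        simp only [Int.toNat_of_nonneg hnn]
        set c := m * β % ℓ
        set d := m * β / ℓ
        apply mem_of_int_mul_mem hℓ I hα _ (hLO _ _)
        -- `α c - β = -ℓ (α d + k β)`
        have hc : α * c = β - ℓ * (α * d + k * β) := by linear_combination α * hdiv + β * hkm
        have e : (α : H3 p) * lineElt p r 1 c = lineElt p r α (α * c) := by
          ext <;> simp [lineElt] <;> ring
        rw [e, hc]
        convert sub_mem hm (zsmul_mem (hLO 0 1) (α * d + k * β)) using 1
        ext <;> simp [lineElt] <;> ring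
    · rintro ⟨_ | a, -, rfl⟩
      · exact (lineIdeal_mem_S3 hℓ hℓ3 hp hlt hr hnone).1
      · exact (lineIdeal_mem_S3 hℓ hℓ3 hp hlt hr (hsome _)).1
  rw [hrange, Set.InjOn.ncard_image, Set.ncard_univ, Nat.card_eq_fintype_card]
  · simp
  · rintro (_ | a) - (_ | b) - h
    · rfl
    · obtain ⟨hS, hm⟩ := lineIdeal_mem_S3 (h3 := h3) hℓ hℓ3 hp hlt hr hnone
      obtain ⟨-, hm'⟩ := lineIdeal_mem_S3 (h3 := h3) hℓ hℓ3 hp hlt hr (hsome (b : ℕ))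
      simp only [lineIdeal] at h
      rw [← h] at hm'
      have := dvd_det_of_mem hℓ hℓ3 hp hlt h3 hr hS hm hm'
      simp at this
      exact absurd this (by simpa using h1)
    · obtain ⟨hS, hm⟩ := lineIdeal_mem_S3 (h3 := h3) hℓ hℓ3 hp hlt hr hnone
      obtain ⟨-, hm'⟩ := lineIdeal_mem_S3 (h3 := h3) hℓ hℓ3 hp hlt hr (hsome (a : ℕ))
      simp only [lineIdeal] at h
      rw [h] at hm'
      have := dvd_det_of_mem hℓ hℓ3 hp hlt h3 hr hS hm hm'
      simp at this
      exact absurd this (by simpa using h1)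
    · obtain ⟨hS, hm⟩ := lineIdeal_mem_S3 (h3 := h3) hℓ hℓ3 hp hlt hr (hsome (a : ℕ))
      obtain ⟨-, hm'⟩ := lineIdeal_mem_S3 (h3 := h3) hℓ hℓ3 hp hlt hr (hsome (b : ℕ))
      simp only [lineIdeal] at h
      rw [← h] at hm'
      have hd := dvd_det_of_mem hℓ hℓ3 hp hlt h3 hr hS hm hm'
      have hd' : (ℓ : ℤ) ∣ ((b : ℕ) : ℤ) - ((a : ℕ) : ℤ) := by simpa using hd
      have hb := b.2
      have ha := a.2
      have h0 := Int.eq_zero_of_abs_lt_dvd hd' (by rw [abs_lt]; omega)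
      congr 1
      ext
      omega

end Count

/-! ### Left ideal classes -/

section Classes

variable {p ℓ : ℕ} {h3 : p % 3 = 2}

lemma SameClass.refl' (I : AddSubgroup (H3 p)) : SameClass I I :=
  ⟨1, one_ne_zero, by simp⟩

lemma image_mul_inverse {μ ν : H3 p} (h : μ * ν = 1) (S : Set (H3 p)) :
    (· * ν) '' ((· * μ) '' S) = S := by
  rw [Set.image_image]
  simp [mul_assoc, h]

lemma SameClass.symm' (hp : 0 < p) {I J : AddSubgroup (H3 p)} (h : SameClass I J) :
    SameClass J I := by
  obtain ⟨μ, hμ, h⟩ := h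
  obtain ⟨ν, h1, h2, -⟩ := exists_inverse hp hμ
  refine ⟨ν, ?_, by rw [h, image_mul_inverse h1]⟩
  rintro rfl
  simp at h1

lemma SameClass.trans' (hp : 0 < p) {I J K : AddSubgroup (H3 p)} (h : SameClass I J)
    (h' : SameClass J K) : SameClass I K := by
  obtain ⟨μ, hμ, h⟩ := h
  obtain ⟨ν, hν, h'⟩ := h'
  refine ⟨μ * ν, ?_, ?_⟩
  · intro h0
    have h1 := Nrd_mul μ ν
    rw [h0] at h1
    have h2 := mul_pos (Nrd_pos hp hμ) (Nrd_pos hp hν)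
    rw [← h1] at h2
    simp [Nrd] at h2
  · rw [h', h, Set.image_image]
    simp [mul_assoc]

/-- The multiplier between two ideals of the same norm has integral norm. -/
lemma Nrd_int_of_image (hℓ : ℓ.Prime) (h3 : p % 3 = 2) {I J : AddSubgroup (H3 p)}
    (hI : I ∈ S3 p ℓ) (hJ : J ∈ S3 p ℓ) {μ : H3 p}
    (h : (J : Set (H3 p)) = (· * μ) '' (I : Set (H3 p))) : ∃ n : ℤ, Nrd μ = n := by
  have hP := prime_int hℓ
  have hlq : (ℓ : ℚ) ≠ 0 := by exact_mod_cast hℓ.ne_zero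
  have hmem : ∀ α ∈ I, α * μ ∈ J := by
    intro α hα
    have : α * μ ∈ (J : Set (H3 p)) := by
      rw [h]
      exact ⟨α, hα, rfl⟩
    exact this
  obtain ⟨n, hn⟩ := hJ.2.1 _ (hmem _ (natCast_mem_of_S3 h3 hI))
  rw [Nrd_mul, Nrd_natCast] at hn
  have hn' : (ℓ : ℚ) * Nrd μ = n := by
    apply mul_left_cancel₀ hlq
    push_cast at hn
    linear_combination hn
  by_cases hd : (ℓ : ℤ) ∣ n
  · obtain ⟨m, rfl⟩ := hd
    refine ⟨m, mul_left_cancel₀ hlq ?_⟩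
    rw [hn']
    push_cast
    ring
  · -- otherwise `ℓ²` divides the norm of every element of `I`
    exfalso
    have := hI.2.2 (ℓ * ℓ) (by
      intro α hα
      obtain ⟨c, hc⟩ := hI.2.1 α hα
      obtain ⟨d, hd'⟩ := hJ.2.1 _ (hmem α hα)
      rw [Nrd_mul, hc] at hd'
      have e : c * n = ℓ * d := by
        qify
        rw [← hn']
        push_cast at hd'
        linear_combination hd'
      obtain ⟨k, hk⟩ := (hP.dvd_or_dvd (Dvd.intro _ e.symm)).resolve_right hd
      exact ⟨k, by rw [hc, hk]; push_cast; ring⟩)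
    have h1 : (ℓ : ℤ) * ℓ ∣ ℓ * 1 := by simpa using this
    exact hP.not_isUnit (isUnit_of_dvd_one ((mul_dvd_mul_iff_left hP.ne_zero).1 h1))

/-- Two non-principal ideals of norm `ℓ` in the same class differ by a unit of `ℤ[ε]`: the
multiplier `μ` has norm `1`, and `ℓ μ ∈ O` is too short to lie outside `ℤ[ε]`. -/
lemma unit_of_image (hℓ : ℓ.Prime) (hℓ3 : 3 < ℓ) (hp : p.Prime) (h3 : p % 3 = 2)
    (hpl : 3 * ℓ ^ 2 < p) (hlt : ℓ < p) {I J : AddSubgroup (H3 p)}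
    (hI : I ∈ S3 p ℓ) (hJ : J ∈ S3 p ℓ) (hnp : ¬ IsPrincipalIdeal (O0 p) J) {μ : H3 p}
    (hμ : μ ≠ 0) (h : (J : Set (H3 p)) = (· * μ) '' (I : Set (H3 p))) :
    ∃ z ∈ eisUnits, μ = Eis p z.1 z.2 := by
  obtain ⟨n, hn⟩ := Nrd_int_of_image hℓ h3 hI hJ h
  obtain ⟨ν, h1, h2, hN⟩ := exists_inverse hp.pos hμ
  obtain ⟨m, hm⟩ := Nrd_int_of_image (μ := ν) hℓ h3 hJ hI (by rw [h, image_mul_inverse h1])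
  have hn1 : n = 1 := by
    rw [hn, hm] at hN
    have hnm : n * m = 1 := by exact_mod_cast hN
    have hpos := Nrd_pos hp.pos hμ
    rw [hn] at hpos
    have hpos : 0 < n := by exact_mod_cast hpos
    rcases Int.eq_one_or_neg_one_of_mul_eq_one hnm with h | h <;> omega
  subst hn1
  have hy : (ℓ : H3 p) * μ ∈ J := by
    have : (ℓ : H3 p) * μ ∈ (J : Set (H3 p)) := by
      rw [h]
      exact ⟨_, natCast_mem_of_S3 h3 hI, rfl⟩
    exact this
  obtain ⟨a, b, hab⟩ := eq_Eis_of_small (h3 := h3) (n := ℓ ^ 2) hp.pos (hJ.1.1 hy)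
    (by rw [Nrd_mul, hn, Nrd_natCast]; simp) (by exact_mod_cast hpl)
  rw [hab] at hy
  have hdiv : (ℓ : ℤ) ∣ a ∧ (ℓ : ℤ) ∣ b := by
    by_contra hnd
    exact hnp (principal_of_Eis_mem hℓ hℓ3 hp hlt h3 hJ hy hnd)
  obtain ⟨⟨c, rfl⟩, ⟨d, rfl⟩⟩ := hdiv
  have hμ' : μ = Eis p c d := by
    apply natCast_mul_cancel hℓ.ne_zero
    rw [hab]
    ext <;> simp [Eis] <;> ring
  refine ⟨(c, d), mem_eisUnits.2 ?_, hμ'⟩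
  rw [hμ', Nrd_Eis] at hn
  exact_mod_cast hn

/-- Right multiplication by a unit `u` of `ℤ[ε]` carries the annihilator ideal of `x` to that of
`ū x u`. -/
lemma sameClass_annIdeal {x y : H3 p} {z : ℤ × ℤ} (hz : z ∈ eisUnits)
    (h : star (Eis p z.1 z.2) * x * Eis p z.1 z.2 = y) :
    SameClass (annIdeal p ℓ h3 x) (annIdeal p ℓ h3 y) := by
  set u := Eis p z.1 z.2 with hu
  have huO : u ∈ OrdO p h3 := Eis_mem _ _
  have hN : Nrd u = ((1 : ℤ) : ℚ) := by rw [hu, Nrd_Eis, mem_eisUnits.1 hz]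
  have h1 : u * star u = 1 := by rw [mul_star_of_Nrd hN, Int.cast_one]
  have h2 : star u * u = 1 := by rw [star_mul_of_Nrd hN, Int.cast_one]
  have hy : star y = star u * star x * u := by
    rw [← h, star_mul, star_mul, star_star, mul_assoc]
  refine ⟨u, ?_, ?_⟩
  · intro h0
    simp [h0] at h1
  · ext m
    constructor
    · rintro ⟨hm, hm'⟩
      refine ⟨m * star u, ⟨mul_mem hm (star_mem_OrdO huO), ?_⟩, ?_⟩
      · have := LO_mul_right hm' (star_mem_OrdO huO)
        rw [hy] at this
        have e : m * star u * star x = m * (star u * star x * u) * star u := by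
          rw [mul_assoc, mul_assoc, mul_assoc (star u * star x), h1, mul_one]
        rw [e]
        exact this
      · simp [mul_assoc, h2]
    · rintro ⟨m, ⟨hm, hm'⟩, rfl⟩
      refine ⟨mul_mem hm huO, ?_⟩
      have e : m * u * star y = m * star x * u := by
        rw [hy, mul_assoc, ← mul_assoc u, ← mul_assoc u, h1, one_mul, mul_assoc]
      simp only
      rw [e]
      exact LO_mul_right hm' huO

/-- Every `ζ j - r` is conjugate under `ζ` to `ζ³ j - r`, and `ζ³ = ±1`. -/
lemma exists_sign {z : ℤ × ℤ} (hz : z ∈ eisUnits) (r : ℤ) :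
    ∃ e : ℤ, (e = 1 ∨ e = -1) ∧
      SameClass (rootIdeal p ℓ h3 r (e, 0)) (rootIdeal p ℓ h3 r z) := by
  have key : ∃ e : ℤ, (e = 1 ∨ e = -1) ∧
      star (Eis p z.1 z.2) * rootElt p r e 0 * Eis p z.1 z.2 = rootElt p r z.1 z.2 := by
    obtain ⟨a, b⟩ := z
    have hz' := hz
    simp [eisUnits] at hz
    rcases hz with ⟨rfl, rfl⟩ | ⟨rfl, rfl⟩ | ⟨rfl, rfl⟩ | ⟨rfl, rfl⟩ | ⟨rfl, rfl⟩ | ⟨rfl, rfl⟩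
    · refine ⟨1, Or.inl rfl, ?_⟩
      ext <;> simp [rootElt, Eis, qj3]
    · refine ⟨-1, Or.inr rfl, ?_⟩
      ext <;> simp [rootElt, Eis, qj3]
    · refine ⟨-1, Or.inr rfl, ?_⟩
      ext <;> simp [rootElt, Eis, qj3] <;> ring
    · refine ⟨1, Or.inl rfl, ?_⟩
      ext <;> simp [rootElt, Eis, qj3] <;> ring
    · refine ⟨-1, Or.inr rfl, ?_⟩
      ext <;> simp [rootElt, Eis, qj3] <;> ring
    · refine ⟨1, Or.inl rfl, ?_⟩
      ext <;> simp [rootElt, Eis, qj3] <;> ring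
  obtain ⟨e, he, h⟩ := key
  exact ⟨e, he, sameClass_annIdeal hz h⟩

lemma one_mem_eisUnits : ((1, 0) : ℤ × ℤ) ∈ eisUnits := by simp [eisUnits]

lemma neg_one_mem_eisUnits : ((-1, 0) : ℤ × ℤ) ∈ eisUnits := by simp [eisUnits]

/-- The two signs are not equivalent, since `-1` is not the square of a unit of `ℤ[ε]`. -/
lemma not_sameClass (hℓ : ℓ.Prime) (hℓ3 : 3 < ℓ) (hp : p.Prime)
    (hpl : 3 * ℓ ^ 2 < p) (hpl' : 3 * ℓ < p) (hlt : ℓ < p) {r : ℤ} (hr : (ℓ : ℤ) ∣ r ^ 2 + p) :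
    ¬ SameClass (rootIdeal p ℓ h3 r (1, 0)) (rootIdeal p ℓ h3 r (-1, 0)) := by
  rintro ⟨μ, hμ, h⟩
  obtain ⟨hS, hx⟩ := rootIdeal_mem_S3 (h3 := h3) hℓ hℓ3 hp hlt hr one_mem_eisUnits
  have hT := rootIdeal_mem_T3 (h3 := h3) hℓ hℓ3 hp hpl' hlt hr neg_one_mem_eisUnits
  obtain ⟨⟨c, d⟩, hz, rfl⟩ := unit_of_image hℓ hℓ3 hp h3 hpl hlt hS hT.1 hT.2.1 hμ h
  have hm : rootElt p r 1 0 * Eis p c d ∈ rootIdeal p ℓ h3 r (-1, 0) := by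
    have : rootElt p r 1 0 * Eis p c d ∈ (rootIdeal p ℓ h3 r (-1, 0) : Set (H3 p)) := by
      rw [h]
      exact ⟨_, hx, rfl⟩
    exact this
  have hm' := hT.1.1.2 _ (star_mem_OrdO (Eis_mem (h3 := h3) c d)) _ hm
  have hz' := mem_eisUnits.1 hz
  have hzq : (c : ℚ) ^ 2 + c * d + d ^ 2 = 1 := by exact_mod_cast hz'
  have e : star (Eis p c d) * (rootElt p r 1 0 * Eis p c d) =
      rootElt p r (c ^ 2 + 2 * c * d) (-2 * c * d - d ^ 2) := by
    ext
    · simp [rootElt, Eis, qj3]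
      linear_combination (-r : ℚ) * hzq
    · simp [rootElt, Eis, qj3]
      ring
    · simp [rootElt, Eis, qj3]
      ring
    · simp [rootElt, Eis, qj3]
      ring
  rw [e] at hm'
  have hw : ((c ^ 2 + 2 * c * d, -2 * c * d - d ^ 2) : ℤ × ℤ) ∈ eisUnits := by
    rw [mem_eisUnits]
    simp only
    linear_combination (c ^ 2 + c * d + d ^ 2 + 1) * hz'
  have heq := rootIdeal_injOn (h3 := h3) hℓ hℓ3 hp hlt hr neg_one_mem_eisUnits hw
    (eq_rootIdeal_of_mem hℓ hℓ3 hp hlt hr hT.1 hm')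
  simp only [Prod.mk.injEq] at heq
  simp [eisUnits] at hz
  rcases hz with ⟨rfl, rfl⟩ | ⟨rfl, rfl⟩ | ⟨rfl, rfl⟩ | ⟨rfl, rfl⟩ | ⟨rfl, rfl⟩ | ⟨rfl, rfl⟩ <;>
    norm_num at heq

lemma classes_ncard (hℓ : ℓ.Prime) (hℓ3 : 3 < ℓ) (hp : p.Prime) (h3 : p % 3 = 2)
    (hpl : 3 * ℓ ^ 2 < p) (hpl' : 3 * ℓ < p) (hlt : ℓ < p) {r : ℤ} (hr : (ℓ : ℤ) ∣ r ^ 2 + p) :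
    {C : Set (AddSubgroup (H3 p)) | ∃ I ∈ T3 p ℓ,
          C = {J ∈ T3 p ℓ | SameClass I J}}.ncard = 2 := by
  have hT1 := rootIdeal_mem_T3 (h3 := h3) hℓ hℓ3 hp hpl' hlt hr one_mem_eisUnits
  have hT2 := rootIdeal_mem_T3 (h3 := h3) hℓ hℓ3 hp hpl' hlt hr neg_one_mem_eisUnits
  have hpair : {C : Set (AddSubgroup (H3 p)) | ∃ I ∈ T3 p ℓ,
      C = {J ∈ T3 p ℓ | SameClass I J}} =
      {{J ∈ T3 p ℓ | SameClass (rootIdeal p ℓ h3 r (1, 0)) J},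
        {J ∈ T3 p ℓ | SameClass (rootIdeal p ℓ h3 r (-1, 0)) J}} := by
    ext C
    constructor
    · rintro ⟨I, hI, rfl⟩
      rw [T3_eq_image hℓ hℓ3 hp h3 hpl hpl' hlt hr] at hI
      obtain ⟨z, hz, rfl⟩ := hI
      obtain ⟨e, he, hs⟩ := exists_sign (p := p) (ℓ := ℓ) (h3 := h3) hz r
      have hC : {J ∈ T3 p ℓ | SameClass (rootIdeal p ℓ h3 r z) J} =
          {J ∈ T3 p ℓ | SameClass (rootIdeal p ℓ h3 r (e, 0)) J} := by
        ext J
        exact and_congr_right fun _ =>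
          ⟨fun h => hs.trans' hp.pos h, fun h => (hs.symm' hp.pos).trans' hp.pos h⟩
      rw [hC]
      rcases he with rfl | rfl
      · exact Or.inl rfl
      · exact Or.inr rfl
    · rintro (rfl | rfl)
      · exact ⟨_, hT1, rfl⟩
      · exact ⟨_, hT2, rfl⟩
  rw [hpair, Set.ncard_pair]
  intro h
  have h1 : rootIdeal p ℓ h3 r (-1, 0) ∈
      {J ∈ T3 p ℓ | SameClass (rootIdeal p ℓ h3 r (-1, 0)) J} := ⟨hT2, SameClass.refl' _⟩
  rw [← h] at h1
  exact not_sameClass hℓ hℓ3 hp hpl hpl' hlt hr h1.2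

end Classes

/-- for primes `ℓ > 3` and `p ≡ 2 (mod 3)` with `p > 3ℓ²`: if `−p` is not
a square mod `ℓ`, no non-principal left `O`-ideal of reduced norm `ℓ` has a square root
of `−p` in its right order; if `−p` is a square mod `ℓ`, exactly `6` of the `ℓ+1` such
ideals are non-principal with a square root of `−p` in their right order, and they fall
into exactly `2` left ideal classes. -/
theorem stmt19 (ℓ p : ℕ) (hℓ : ℓ.Prime) (hℓ3 : 3 < ℓ) (hp : p.Prime)
    (hp3 : p % 3 = 2) (hpl : 3 * ℓ ^ 2 < p) :
    (¬ IsSquare (-(p : ZMod ℓ)) →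
      ∀ I ∈ S3 p ℓ, ¬ IsPrincipalIdeal (O0 p) I →
        ¬ ∃ s : H3 p, (∀ y ∈ I, y * s ∈ I) ∧ s * s = -(p : H3 p)) ∧
    (IsSquare (-(p : ZMod ℓ)) →
      (S3 p ℓ).ncard = ℓ + 1 ∧
      (T3 p ℓ).ncard = 6 ∧
      {C : Set (AddSubgroup (H3 p)) | ∃ I ∈ T3 p ℓ,
          C = {J ∈ T3 p ℓ | SameClass I J}}.ncard = 2) := by
  have hlt' : 3 * ℓ < p := by nlinarith
  have hlt : ℓ < p := by omega
  have hcast : ∀ c : ℤ, (ℓ : ℤ) ∣ c ^ 2 + p ↔ -(p : ZMod ℓ) = c * c := by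
    intro c
    rw [← ZMod.intCast_zmod_eq_zero_iff_dvd]
    push_cast
    constructor <;> intro h <;> linear_combination -h
  refine ⟨?_, ?_⟩
  · rintro hsq I hI hnp ⟨s, hs, hs2⟩
    obtain ⟨a, b, c, -, hc, -⟩ := sqrt_scalar hℓ hℓ3 hp hp3 hpl hlt hI hnp hs hs2
    exact hsq ⟨c, (hcast c).1 hc⟩
  · rintro ⟨x, hx⟩
    obtain ⟨r, rfl⟩ := ZMod.intCast_surjective x
    have hr := (hcast r).2 hx
    exact ⟨S3_ncard hℓ hℓ3 hp hlt hp3 hr, T3_ncard hℓ hℓ3 hp hp3 hpl hlt' hlt hr,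
      classes_ncard hℓ hℓ3 hp hp3 hpl hlt' hlt hr⟩
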